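/- arXiv:2104.01786 — 2 statements merged into one kernel-verified Lean document; each statement's English description precedes it below -/
import Mathlib

section
/- Define J̃ = Ẽ⁴τ on the split octonions 𝕆̃, where τ = Ẽ⁵Ẽ⁶Ẽ⁷. The commutant of J̃ inside the Lie algebra span{Ẽ^i Ẽ^j : i<j} ≅ so(4,3) is the direct sum of the span of {Ẽ^i Ẽ^j : 1 ≤ i < j ≤ 3} and the span of {Ẽ^i Ẽ^j : 4 ≤ i < j ≤ 7}, a 9-dimensional subalgebra isomorphic to so(3) ⊕ so(1,3). -/
open Matrix BigOperators

noncomputable section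

def sIdx : Fin 8 → Fin 8 → Fin 8 :=
  ![![0, 1, 2, 3, 4, 5, 6, 7],
    ![1, 0, 7, 6, 5, 4, 3, 2],
    ![2, 7, 0, 5, 6, 3, 4, 1],
    ![3, 6, 5, 0, 7, 2, 1, 4],
    ![4, 5, 6, 7, 0, 1, 2, 3],
    ![5, 4, 3, 2, 1, 0, 7, 6],
    ![6, 3, 4, 1, 2, 7, 0, 5],
    ![7, 2, 1, 4, 3, 6, 5, 0]]

def sSgn : Fin 8 → Fin 8 → ℝ :=
  ![![1, 1, 1, 1, 1, 1, 1, 1],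
    ![1, 1, 1, -1, 1, 1, -1, 1],
    ![1, -1, 1, 1, 1, 1, 1, -1],
    ![1, 1, -1, 1, 1, -1, 1, 1],
    ![1, -1, -1, -1, 1, -1, -1, -1],
    ![1, -1, -1, 1, 1, -1, 1, -1],
    ![1, 1, -1, -1, 1, -1, -1, 1],
    ![1, -1, 1, -1, 1, 1, -1, -1]]

/-- Left multiplication by the split octonion `y` as an 8×8 real matrix. -/
def Lt (y : Fin 8 → ℝ) : Matrix (Fin 8) (Fin 8) ℝ :=
  Matrix.of fun r c => ∑ i, if r = sIdx i c then sSgn i c * y i else 0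

/-- The imaginary split octonion unit `ẽ^(i+1)` as a vector. -/
def et (i : Fin 7) : Fin 8 → ℝ := Pi.single i.succ 1

/-- The Clifford generator `Ẽ^(i+1) = L_{ẽ^(i+1)}`. -/
def Et (i : Fin 7) : Matrix (Fin 8) (Fin 8) ℝ := Lt (et i)

/-- The spinor image of so(4,3): the span of the products `Ẽ^i Ẽ^j`, `i < j`. -/
def spanEtEt : Submodule ℝ (Matrix (Fin 8) (Fin 8) ℝ) :=
  Submodule.span ℝ {M | ∃ i j : Fin 7, i < j ∧ M = Et i * Et j}

/-- The complex structure `J̃ = Ẽ⁴ τ`. -/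
def Jt : Matrix (Fin 8) (Fin 8) ℝ := Et 3 * (Et 4 * Et 5 * Et 6)

/-- The commutant of `J̃` inside the spinor image of so(4,3). -/
def commJtSub : Submodule ℝ (Matrix (Fin 8) (Fin 8) ℝ) :=
  spanEtEt ⊓ LinearMap.ker (LinearMap.mulLeft ℝ Jt - LinearMap.mulRight ℝ Jt)

/-- The matrix of the Minkowski form of so(1,3). -/
def eta4 : Matrix (Fin 4) (Fin 4) ℝ := Matrix.diagonal ![(-1 : ℝ), 1, 1, 1]

/-!
The matrix `J̃` is the product of the Clifford generators `Ẽ⁴, …, Ẽ⁷`, so moving `Ẽⁱ` past it costs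
one sign for every factor other than `Ẽⁱ` itself: `J̃` commutes with `Ẽ¹, Ẽ², Ẽ³` (four signs) and
anticommutes with `Ẽ⁴, …, Ẽ⁷` (three signs). Hence it commutes with `ẼⁱẼʲ` when both factors lie on
the same side and anticommutes with it otherwise; since `J̃` is invertible, an element of the
commutant has no component along the mixed products.

The two families of surviving products are identified by the spin representation
`γ X = ¼ ∑ X i j (η j)⁻¹ e i e j`. For `X` skew-adjoint with respect to `η` one has
`[γ X, e k] = ∑ X i k e i`, so `γ` is an injective Lie algebra homomorphism, and it maps
`so(η)` onto the span of the products `e i e j`. Restricted to the block-diagonal matrices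
`so(3) ⊕ so(1,3)` its image is the commutant.
-/

namespace CliffordSpin

attribute [local instance] LieRing.ofAssociativeRing

section CliffordFamily

variable {K A ι κ : Type*} [CommRing K] [Ring A] [Algebra K A] [DecidableEq ι]

/-- `e` satisfies the Clifford relations of the diagonal form with entries `η`, in the polarised
form `e i * e j + e j * e i = 2 η i δ_ij`. -/
def IsCliffordFamily (η : ι → K) (e : ι → A) : Prop :=
  ∀ i j, e i * e j + e j * e i = (2 * diagonal η i j) • (1 : A)

variable {η : ι → K} {e : ι → A}

namespace IsCliffordFamily

theorem comp [DecidableEq κ] (h : IsCliffordFamily η e) {f : κ → ι} (hf : f.Injective) :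
    IsCliffordFamily (η ∘ f) (e ∘ f) := fun i j ↦ by
  simpa only [diagonal_apply, hf.eq_iff, Function.comp_apply] using h (f i) (f j)

theorem map_intCast {R : Type*} [Ring R] {η : ι → ℤ} {e : ι → R} (h : IsCliffordFamily η e)
    (f : R →+* A) : IsCliffordFamily (fun i ↦ (η i : K)) (f ∘ e) := fun i j ↦ by
  have hij := congrArg f (h i j)
  rw [map_add, map_mul, map_mul, map_zsmul, map_one] at hij
  simp only [Function.comp_apply, hij, diagonal_apply]
  rw [← Int.cast_smul_eq_zsmul K]
  push_cast
  rfl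

theorem mul_eq_neg_mul (h : IsCliffordFamily η e) {i j : ι} (hij : i ≠ j) :
    e i * e j = -(e j * e i) :=
  eq_neg_of_add_eq_zero_left <| by rw [h i j, diagonal_apply_ne _ hij, mul_zero, zero_smul]

theorem semiconjBy_list_prod (h : IsCliffordFamily η e) (i : ι) (l : List ι) :
    SemiconjBy (l.map e).prod (e i) ((-1 : ℤ) ^ l.countP (· ≠ i) • e i) := by
  induction l with
  | nil => simp
  | cons j l ih =>
    rw [List.map_cons, List.prod_cons]
    refine SemiconjBy.mul_left ?_ ih
    rw [SemiconjBy, mul_smul_comm, smul_mul_assoc]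
    by_cases hji : j = i
    · rw [List.countP_cons_of_neg (by simpa using hji), hji]
    · rw [List.countP_cons_of_pos (by simpa using hji), h.mul_eq_neg_mul hji, pow_succ,
        mul_neg_one, neg_smul, smul_neg]

theorem sum_smul_mul_add_mul_sum_smul (h : IsCliffordFamily η e) (c : ι → K) {s : Finset ι} {j : ι}
    (hj : j ∈ s) :
    (∑ i ∈ s, c i • e i) * e j + e j * ∑ i ∈ s, c i • e i = (2 * (c j * η j)) • (1 : A) := by
  have term (i : ι) :
      c i • e i * e j + e j * c i • e i = (c i * (2 * diagonal η i j)) • (1 : A) := by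
    rw [smul_mul_assoc, mul_smul_comm, ← smul_add, h, smul_smul]
  rw [Finset.sum_mul, Finset.mul_sum, ← Finset.sum_add_distrib,
    Finset.sum_congr rfl fun i _ ↦ term i, ← Finset.sum_smul]
  simp [diagonal_apply, hj, mul_left_comm]

end IsCliffordFamily

theorem IsCliffordFamily.isUnit {K : Type*} [Field K] [NeZero (2 : K)] [Algebra K A] {η : ι → K}
    (h : IsCliffordFamily η e) {i : ι} (hη : η i ≠ 0) : IsUnit (e i) := by
  have hsq : (2 : K) • (e i * e i) = (2 * η i) • (1 : A) := by
    rw [two_smul, h, diagonal_apply_eq]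
  rw [mul_smul, (smul_right_injective A (two_ne_zero' K)).eq_iff] at hsq
  rw [← isUnit_mul_self_iff, hsq, ← Algebra.algebraMap_eq_smul_one]
  exact hη.isUnit.map (algebraMap K A)

theorem IsCliffordFamily.linearIndependent {K : Type*} [Field K] [NeZero (2 : K)] [Algebra K A]
    [Nontrivial A] {η : ι → K} (h : IsCliffordFamily η e) (hη : ∀ i, η i ≠ 0) :
    LinearIndependent K e := by
  rw [linearIndependent_iff']
  intro s c hc j hj
  have hcj := h.sum_smul_mul_add_mul_sum_smul c hj
  rw [hc, zero_mul, mul_zero, add_zero, eq_comm] at hcj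
  simpa [hη, two_ne_zero] using (smul_eq_zero.1 hcj).resolve_right one_ne_zero

end CliffordFamily

section PlaneRotation

variable {K ι : Type*} [CommRing K] [DecidableEq ι]

/-- The generator of the rotations of the `(i, j)`-plane preserving the diagonal form `η`. -/
def planeRotation (η : ι → K) (i j : ι) : Matrix ι ι K :=
  single i j (η j) - single j i (η i)

theorem planeRotation_self (η : ι → K) (i : ι) : planeRotation η i i = 0 := sub_self _

theorem planeRotation_swap (η : ι → K) (i j : ι) :
    planeRotation η j i = -planeRotation η i j := (neg_sub _ _).symm

theorem linearIndependent_planeRotation {K : Type*} [Field K] [LinearOrder ι] {η : ι → K}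
    (hη : ∀ i, η i ≠ 0) :
    LinearIndependent K
      fun p : {p : ι × ι // p.1 < p.2} ↦ planeRotation η p.1.1 p.1.2 := by
  have entry (p q : {p : ι × ι // p.1 < p.2}) :
      planeRotation η p.1.1 p.1.2 q.1.1 q.1.2 = if p = q then η q.1.2 else 0 := by
    have := p.2
    have := q.2
    simp only [planeRotation, Matrix.sub_apply, single_apply, Subtype.ext_iff, Prod.ext_iff]
    grind
  rw [linearIndependent_iff']
  intro s c hc q hq
  have hcq := congrFun₂ hc q.1.1 q.1.2
  simpa [Matrix.sum_apply, entry, hη, hq] using hcq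

variable [Fintype ι]

theorem mem_skewAdjoint_diagonal_iff {η : ι → K} {X : Matrix ι ι K} :
    X ∈ skewAdjointMatricesLieSubalgebra (diagonal η) ↔ ∀ i j, X j i * η j = -(η i * X i j) := by
  rw [mem_skewAdjointMatricesLieSubalgebra, mem_skewAdjointMatricesSubmodule, Matrix.IsSkewAdjoint,
    Matrix.IsAdjointPair, ← Matrix.ext_iff]
  simp only [mul_diagonal, diagonal_mul, transpose_apply, Matrix.neg_apply, mul_neg]

theorem mem_skewAdjoint_one_iff {X : Matrix ι ι K} :
    X ∈ skewAdjointMatricesLieSubalgebra (diagonal (1 : ι → K)) ↔ Xᵀ = -X := by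
  simp [Matrix.IsSkewAdjoint, Matrix.IsAdjointPair]

theorem planeRotation_mem (η : ι → K) (i j : ι) :
    planeRotation η i j ∈ skewAdjointMatricesLieSubalgebra (diagonal η) := by
  rw [mem_skewAdjoint_diagonal_iff]
  intro a b
  simp only [planeRotation, Matrix.sub_apply, single_apply]
  grind

end PlaneRotation

section SkewAdjoint

variable {K ι : Type*} [Field K] [Fintype ι] [DecidableEq ι] {η : ι → K}

theorem inv_mul_apply_of_mem_skewAdjoint (hη : ∀ i, η i ≠ 0) {X : Matrix ι ι K}
    (hX : X ∈ skewAdjointMatricesLieSubalgebra (diagonal η)) (i j : ι) :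
    (η j)⁻¹ * X i j = -((η i)⁻¹ * X j i) := by
  have hi := hη i
  have hj := hη j
  have hij := mem_skewAdjoint_diagonal_iff.1 hX i j
  field_simp
  linear_combination hij

theorem sum_smul_planeRotation (hη : ∀ i, η i ≠ 0) {X : Matrix ι ι K}
    (hX : X ∈ skewAdjointMatricesLieSubalgebra (diagonal η)) :
    ∑ i, ∑ j, ((η j)⁻¹ * X i j) • planeRotation η i j = (2 : K) • X := by
  have term (i j : ι) :
      ((η j)⁻¹ * X i j) • planeRotation η i j = single i j (X i j) + single j i (X j i) := by
    have hji : (η j)⁻¹ * X i j * η i = -X j i := by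
      rw [inv_mul_apply_of_mem_skewAdjoint hη hX, neg_mul, mul_right_comm,
        inv_mul_cancel₀ (hη i), one_mul]
    rw [planeRotation, smul_sub, smul_single, smul_single, smul_eq_mul, smul_eq_mul, hji,
      mul_right_comm, inv_mul_cancel₀ (hη j), one_mul, ← single_neg, sub_neg_eq_add]
  simp only [term, Finset.sum_add_distrib]
  rw [Finset.sum_comm (f := fun i j ↦ single j i (X j i)), ← matrix_eq_sum_single, two_smul]

theorem skewAdjoint_diagonal_eq_span [NeZero (2 : K)] [LinearOrder ι] (hη : ∀ i, η i ≠ 0) :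
    (skewAdjointMatricesLieSubalgebra (diagonal η)).toSubmodule =
      Submodule.span K
        (Set.range fun p : {p : ι × ι // p.1 < p.2} ↦ planeRotation η p.1.1 p.1.2) := by
  apply le_antisymm
  · intro X hX
    rw [← inv_smul_smul₀ (two_ne_zero' K) X, ← sum_smul_planeRotation hη hX]
    refine Submodule.smul_mem _ _ <| Submodule.sum_mem _ fun i _ ↦ Submodule.sum_mem _ fun j _ ↦
      Submodule.smul_mem _ _ ?_
    rcases lt_trichotomy i j with hij | rfl | hji
    · exact Submodule.subset_span ⟨⟨(i, j), hij⟩, rfl⟩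
    · exact planeRotation_self η i ▸ Submodule.zero_mem _
    · exact planeRotation_swap η j i ▸
        Submodule.neg_mem _ (Submodule.subset_span ⟨⟨(j, i), hji⟩, rfl⟩)
  · rw [Submodule.span_le]
    rintro _ ⟨p, rfl⟩
    exact planeRotation_mem η _ _

theorem finrank_skewAdjoint_diagonal [NeZero (2 : K)] [LinearOrder ι] (hη : ∀ i, η i ≠ 0) :
    Module.finrank K (skewAdjointMatricesLieSubalgebra (diagonal η)) =
      Fintype.card {p : ι × ι // p.1 < p.2} := by
  rw [← finrank_span_eq_card (linearIndependent_planeRotation hη),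
    ← skewAdjoint_diagonal_eq_span hη]
  rfl

end SkewAdjoint

section GenImage

variable {K A ι : Type*} [CommRing K] [Ring A] [Algebra K A] [Fintype ι]

/-- The image of `e j` under the linear map with matrix `X` in the family `e`; the coefficients are
column `j` of `X`. -/
def genImage (e : ι → A) (X : Matrix ι ι K) (j : ι) : A := ∑ i, X i j • e i

theorem genImage_mul (e : ι → A) (X Y : Matrix ι ι K) (j : ι) :
    genImage e (X * Y) j = ∑ i, Y i j • genImage e X i := by
  simp only [genImage, mul_apply, Finset.sum_smul, Finset.smul_sum, smul_smul]
  rw [Finset.sum_comm]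
  simp only [mul_comm]

end GenImage

section Spin

variable {K A ι : Type*} [Field K] [Ring A] [Algebra K A] [Fintype ι] [DecidableEq ι]

/-- The spin representation of the diagonal form `η`: the linear map
`X ↦ ¼ ∑ X i j (η j)⁻¹ e i e j`, normalised so that for skew-adjoint `X` the commutator with
`spin η e X` maps `e k` to `∑ X i k e i`. -/
def spin (η : ι → K) (e : ι → A) : Matrix ι ι K →ₗ[K] A :=
  liftLinear K fun i j ↦ LinearMap.toSpanSingleton K A ((4 * η j)⁻¹ • (e i * e j))

theorem spin_apply (η : ι → K) (e : ι → A) (X : Matrix ι ι K) :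
    spin η e X = ∑ j, (4 * η j)⁻¹ • (genImage e X j * e j) := by
  simp only [spin, liftLinear_apply, LinearMap.toSpanSingleton_apply, genImage, Finset.sum_mul,
    Finset.smul_sum, smul_mul_assoc]
  rw [Finset.sum_comm]
  simp only [smul_comm (X _ _)]

variable {η : ι → K} {e : ι → A}

theorem spin_planeRotation [NeZero (2 : K)] (h : IsCliffordFamily η e) (hη : ∀ i, η i ≠ 0)
    {i j : ι} (hij : i ≠ j) : spin η e (planeRotation η i j) = (2⁻¹ : K) • (e i * e j) := by
  have coeff (k : ι) : η k * (4 * η k)⁻¹ = 2⁻¹ * 2⁻¹ := by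
    rw [mul_inv, mul_left_comm, mul_inv_cancel₀ (hη k), mul_one, ← mul_inv]; norm_num
  have halves : (2⁻¹ * 2⁻¹ + 2⁻¹ * 2⁻¹ : K) = 2⁻¹ := by
    rw [← two_mul, mul_inv_cancel_left₀ two_ne_zero]
  rw [planeRotation, map_sub, spin, liftLinear_single, liftLinear_single,
    LinearMap.toSpanSingleton_apply, LinearMap.toSpanSingleton_apply, smul_smul, smul_smul, coeff,
    coeff, h.mul_eq_neg_mul hij.symm, smul_neg, sub_neg_eq_add, ← add_smul, halves]

theorem lie_spin_gen [NeZero (2 : K)] (h : IsCliffordFamily η e) (hη : ∀ i, η i ≠ 0)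
    {X : Matrix ι ι K} (hX : X ∈ skewAdjointMatricesLieSubalgebra (diagonal η)) (k : ι) :
    ⁅spin η e X, e k⁆ = genImage e X k := by
  have h4 : (4 : K) = 2 * 2 := by norm_num
  have lie_mul_eq (a b c : A) : ⁅a * b, c⁆ = a * (b * c + c * b) - (a * c + c * a) * b := by
    rw [Ring.lie_def]; noncomm_ring
  have coeff_diag (j : ι) : (4 * η j)⁻¹ * (2 * diagonal η j k) = if j = k then 2⁻¹ else 0 := by
    have hj := hη j
    split_ifs with hjk
    · rw [← hjk, diagonal_apply_eq, h4]; field_simp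
    · rw [diagonal_apply_ne _ hjk, mul_zero, mul_zero]
  have coeff_skew (j : ι) : (4 * η j)⁻¹ * (2 * (X k j * η k)) = -(2⁻¹ * X j k) := by
    have hk := hη k
    have hkj := inv_mul_apply_of_mem_skewAdjoint hη hX k j
    calc (4 * η j)⁻¹ * (2 * (X k j * η k)) = 2⁻¹ * η k * ((η j)⁻¹ * X k j) := by
          rw [h4]; field_simp
      _ = -(2⁻¹ * X j k) := by rw [hkj]; field_simp
  have term (j : ι) : (4 * η j)⁻¹ • ⁅genImage e X j * e j, e k⁆ =
      (if j = k then (2⁻¹ : K) else 0) • genImage e X j + (2⁻¹ : K) • X j k • e j := by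
    rw [lie_mul_eq, h, genImage, h.sum_smul_mul_add_mul_sum_smul _ (Finset.mem_univ k),
      ← genImage, mul_smul_comm, mul_one, smul_mul_assoc, one_mul, smul_sub,
      smul_smul, smul_smul, coeff_diag, coeff_skew, neg_smul, sub_neg_eq_add, smul_smul]
  simp only [spin_apply, sum_lie, smul_lie, term, Finset.sum_add_distrib, ite_smul, zero_smul,
    Finset.sum_ite_eq', Finset.mem_univ, if_true, ← Finset.smul_sum]
  rw [← genImage, ← add_smul, ← two_mul, mul_inv_cancel₀ two_ne_zero, one_smul]

theorem lie_spin_genImage [NeZero (2 : K)] (h : IsCliffordFamily η e) (hη : ∀ i, η i ≠ 0)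
    {X : Matrix ι ι K} (hX : X ∈ skewAdjointMatricesLieSubalgebra (diagonal η))
    (Y : Matrix ι ι K) (j : ι) : ⁅spin η e X, genImage e Y j⁆ = genImage e (X * Y) j := by
  rw [genImage_mul, genImage, lie_sum]
  exact Finset.sum_congr rfl fun i _ ↦ by rw [LieAlgebra.lie_smul, lie_spin_gen h hη hX]

theorem sum_genImage_mul_genImage (hη : ∀ i, η i ≠ 0)
    {X : Matrix ι ι K} (hX : X ∈ skewAdjointMatricesLieSubalgebra (diagonal η))
    (Y : Matrix ι ι K) :
    ∑ j, (4 * η j)⁻¹ • (genImage e Y j * genImage e X j) = -spin η e (Y * X) := by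
  have coeff (i j : ι) : (4 * η j)⁻¹ * X i j = -((4 * η i)⁻¹ * X j i) := by
    rw [mul_inv, mul_assoc, inv_mul_apply_of_mem_skewAdjoint hη hX, mul_neg, ← mul_assoc, ← mul_inv]
  calc ∑ j, (4 * η j)⁻¹ • (genImage e Y j * genImage e X j)
      = ∑ j, ∑ i, ((4 * η j)⁻¹ * X i j) • (genImage e Y j * e i) := by
        simp only [genImage.eq_def _ X, Finset.mul_sum, mul_smul_comm, Finset.smul_sum, smul_smul]
    _ = -∑ i, ∑ j, ((4 * η i)⁻¹ * X j i) • (genImage e Y j * e i) := by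
        simp only [← Finset.sum_neg_distrib, ← neg_smul]
        rw [Finset.sum_comm]
        exact Finset.sum_congr rfl fun i _ ↦ Finset.sum_congr rfl fun j _ ↦ by rw [coeff]
    _ = -spin η e (Y * X) := by
        simp only [spin_apply, genImage_mul, Finset.sum_mul, smul_mul_assoc, Finset.smul_sum,
          smul_smul]

theorem lie_spin [NeZero (2 : K)] (h : IsCliffordFamily η e) (hη : ∀ i, η i ≠ 0)
    {X : Matrix ι ι K} (hX : X ∈ skewAdjointMatricesLieSubalgebra (diagonal η))
    (Y : Matrix ι ι K) : ⁅spin η e X, spin η e Y⁆ = spin η e ⁅X, Y⁆ := by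
  have lie_mul (a b c : A) : ⁅a, b * c⁆ = ⁅a, b⁆ * c + b * ⁅a, c⁆ := by
    simp only [Ring.lie_def]; noncomm_ring
  rw [spin_apply η e Y, lie_sum, Ring.lie_def X, map_sub, sub_eq_add_neg,
    ← sum_genImage_mul_genImage hη hX, spin_apply η e (X * Y), ← Finset.sum_add_distrib]
  exact Finset.sum_congr rfl fun j _ ↦ by
    rw [LieAlgebra.lie_smul, lie_mul, lie_spin_genImage h hη hX, lie_spin_gen h hη hX, smul_add]

/-- The spin representation as a Lie algebra homomorphism from the orthogonal Lie algebra of the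
diagonal form `η` to the algebra containing the Clifford family. -/
def spinHom [NeZero (2 : K)] (h : IsCliffordFamily η e) (hη : ∀ i, η i ≠ 0) :
    skewAdjointMatricesLieSubalgebra (diagonal η) →ₗ⁅K⁆ A where
  toLinearMap := spin η e ∘ₗ (skewAdjointMatricesLieSubalgebra (diagonal η)).toSubmodule.subtype
  map_lie' {X Y} := (lie_spin h hη X.2 Y).symm

theorem spinHom_injective [NeZero (2 : K)] [Nontrivial A] (h : IsCliffordFamily η e)
    (hη : ∀ i, η i ≠ 0) : Function.Injective (spinHom h hη) := by
  rw [injective_iff_map_eq_zero]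
  intro X hX
  ext i k
  have hsum : ∑ i, (X : Matrix ι ι K) i k • e i = 0 := by
    rw [← genImage, ← lie_spin_gen h hη X.2, show spin η e X = 0 from hX, zero_lie]
  exact Fintype.linearIndependent_iff.1 (h.linearIndependent hη) _ hsum i

end Spin

section Bivectors

variable {K A ι : Type*} [CommRing K] [Ring A] [Algebra K A] [LinearOrder ι]

variable (K) in
/-- The span of the products `e i * e j` with `i < j`; for a Clifford family this is the image of
the orthogonal Lie algebra under the spin representation. -/
def bivectors (e : ι → A) : Submodule K A :=
  Submodule.span K {x | ∃ i j, i < j ∧ x = e i * e j}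

theorem bivectors_eq_span_range (e : ι → A) :
    bivectors K e =
      Submodule.span K (Set.range fun p : {p : ι × ι // p.1 < p.2} ↦ e p.1.1 * e p.1.2) :=
  congrArg (Submodule.span K) <| Set.ext fun _ ↦ ⟨fun ⟨i, j, hij, hx⟩ ↦ ⟨⟨(i, j), hij⟩, hx.symm⟩,
    fun ⟨p, hx⟩ ↦ ⟨p.1.1, p.1.2, p.2, hx.symm⟩⟩

theorem bivectors_comp {κ : Type*} [LinearOrder κ] (e : ι → A) {f : κ → ι} (hf : StrictMono f) :
    bivectors K (e ∘ f) =
      Submodule.span K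
        {x | ∃ i j, i < j ∧ i ∈ Set.range f ∧ j ∈ Set.range f ∧ x = e i * e j} := by
  rw [bivectors]
  congr 1
  ext x
  constructor
  · rintro ⟨i, j, hij, hx⟩
    exact ⟨f i, f j, hf hij, ⟨i, rfl⟩, ⟨j, rfl⟩, hx⟩
  · rintro ⟨_, _, hij, ⟨i, rfl⟩, ⟨j, rfl⟩, hx⟩
    exact ⟨i, j, hf.lt_iff_lt.1 hij, hx⟩

end Bivectors

section BlockDiagonal

variable {K ι κ : Type*} [CommRing K] [Fintype ι] [DecidableEq ι] [Fintype κ] [DecidableEq κ]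
  {η : ι → K} {θ : κ → K}

theorem fromBlocks_mem_skewAdjoint {X : Matrix ι ι K} {Y : Matrix κ κ K}
    (hX : X ∈ skewAdjointMatricesLieSubalgebra (diagonal η))
    (hY : Y ∈ skewAdjointMatricesLieSubalgebra (diagonal θ)) :
    fromBlocks X 0 0 Y ∈ skewAdjointMatricesLieSubalgebra (diagonal (Sum.elim η θ)) := by
  rw [mem_skewAdjoint_diagonal_iff] at *
  rintro (i | i) (j | j) <;> simp [hX, hY]

variable (η θ) in
/-- The block-diagonal embedding of the product of two orthogonal Lie algebras into the orthogonal
Lie algebra of the orthogonal sum of the two forms. -/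
def blockDiagonalHom :
    (skewAdjointMatricesLieSubalgebra (diagonal η) ×
      skewAdjointMatricesLieSubalgebra (diagonal θ)) →ₗ⁅K⁆
      skewAdjointMatricesLieSubalgebra (diagonal (Sum.elim η θ)) where
  toFun p := ⟨fromBlocks p.1 0 0 p.2, fromBlocks_mem_skewAdjoint p.1.2 p.2.2⟩
  map_add' p q := by ext1; simp [fromBlocks_add]
  map_smul' c p := by ext1; simp [fromBlocks_smul]
  map_lie' {p q} := by
    ext1
    simp [Ring.lie_def, fromBlocks_multiply, sub_eq_add_neg, fromBlocks_neg, fromBlocks_add]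

theorem blockDiagonalHom_injective : Function.Injective (blockDiagonalHom η θ) := fun p q h ↦ by
  have hblocks := fromBlocks_inj.1 (congrArg Subtype.val h)
  exact Prod.ext (Subtype.ext hblocks.1) (Subtype.ext hblocks.2.2.2)

end BlockDiagonal

section BlockSpin

variable {K A ι κ : Type*} [Field K] [Ring A] [Algebra K A]
  [Fintype ι] [DecidableEq ι] [Fintype κ] [DecidableEq κ] {η : ι → K} {θ : κ → K}

theorem map_spin_skewAdjoint [NeZero (2 : K)] [LinearOrder ι] {e : ι → A}
    (h : IsCliffordFamily η e) (hη : ∀ i, η i ≠ 0) :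
    (skewAdjointMatricesLieSubalgebra (diagonal η)).toSubmodule.map (spin η e) =
      bivectors K e := by
  have half : IsUnit (2⁻¹ : K) := (inv_ne_zero two_ne_zero).isUnit
  have image_gen : spin η e ∘ (fun p : {p : ι × ι // p.1 < p.2} ↦ planeRotation η p.1.1 p.1.2) =
      (2⁻¹ : K) • fun p : {p : ι × ι // p.1 < p.2} ↦ e p.1.1 * e p.1.2 :=
    funext fun p ↦ spin_planeRotation h hη p.2.ne
  rw [skewAdjoint_diagonal_eq_span hη, Submodule.map_span, ← Set.range_comp, image_gen,
    bivectors_eq_span_range]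
  exact Set.range_smul (2⁻¹ : K) (fun p : {p : ι × ι // p.1 < p.2} ↦ e p.1.1 * e p.1.2) ▸
    Submodule.span_smul_eq_of_isUnit _ _ half

variable {e : ι ⊕ κ → A}

theorem spin_fromBlocks (X : Matrix ι ι K) (Y : Matrix κ κ K) :
    spin (Sum.elim η θ) e (fromBlocks X 0 0 Y) =
      spin η (e ∘ Sum.inl) X + spin θ (e ∘ Sum.inr) Y := by
  simp [spin_apply, genImage]

/-- The spin representation restricted to block-diagonal matrices, for a Clifford family of an
orthogonal sum of two forms. -/
def blockSpinHom [NeZero (2 : K)] (h : IsCliffordFamily (Sum.elim η θ) e)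
    (hη : ∀ i, η i ≠ 0) (hθ : ∀ i, θ i ≠ 0) :
    (skewAdjointMatricesLieSubalgebra (diagonal η) ×
      skewAdjointMatricesLieSubalgebra (diagonal θ)) →ₗ⁅K⁆ A :=
  (spinHom h (Sum.forall.2 ⟨hη, hθ⟩)).comp (blockDiagonalHom η θ)

section

variable [NeZero (2 : K)] (h : IsCliffordFamily (Sum.elim η θ) e)
  (hη : ∀ i, η i ≠ 0) (hθ : ∀ i, θ i ≠ 0)

theorem blockSpinHom_injective [Nontrivial A] :
    Function.Injective (blockSpinHom h hη hθ) :=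
  (spinHom_injective h (Sum.forall.2 ⟨hη, hθ⟩)).comp blockDiagonalHom_injective

theorem range_blockSpinHom [LinearOrder ι] [LinearOrder κ] :
    (blockSpinHom h hη hθ).range.toSubmodule =
      bivectors K (e ∘ Sum.inl) ⊔ bivectors K (e ∘ Sum.inr) := by
  have coprod_eq : (blockSpinHom h hη hθ).toLinearMap =
      (spin η (e ∘ Sum.inl) ∘ₗ Submodule.subtype _).coprod
        (spin θ (e ∘ Sum.inr) ∘ₗ Submodule.subtype _) :=
    LinearMap.ext fun p ↦ spin_fromBlocks (η := η) (θ := θ) (e := e) p.1.1 p.2.1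
  rw [LieHom.range_toSubmodule, coprod_eq, LinearMap.range_coprod, LinearMap.range_comp,
    LinearMap.range_comp, Submodule.range_subtype, Submodule.range_subtype,
    ← map_spin_skewAdjoint (η := η) (h.comp Sum.inl_injective) hη,
    ← map_spin_skewAdjoint (η := θ) (h.comp Sum.inr_injective) hθ]

theorem finrank_range_blockSpinHom [Nontrivial A] [LinearOrder ι] [LinearOrder κ] :
    Module.finrank K (blockSpinHom h hη hθ).range =
      Fintype.card {p : ι × ι // p.1 < p.2} + Fintype.card {p : κ × κ // p.1 < p.2} := by
  rw [← finrank_skewAdjoint_diagonal hη, ← finrank_skewAdjoint_diagonal hθ, ← Module.finrank_prod]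
  exact LinearMap.finrank_range_of_inj (f := (blockSpinHom h hη hθ).toLinearMap)
    (blockSpinHom_injective h hη hθ)

end

end BlockSpin

section Commutant

variable {K A : Type*} [CommRing K] [Ring A] [Algebra K A] {J : A}

theorem mem_ker_mulLeft_sub_mulRight {x : A} :
    x ∈ LinearMap.ker (LinearMap.mulLeft K J - LinearMap.mulRight K J) ↔ Commute J x :=
  sub_eq_zero

theorem mem_ker_mulLeft_add_mulRight {x : A} :
    x ∈ LinearMap.ker (LinearMap.mulLeft K J + LinearMap.mulRight K J) ↔ SemiconjBy J x (-x) := by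
  rw [SemiconjBy, neg_mul]
  exact add_eq_zero_iff_eq_neg

theorem sup_inf_ker_mulLeft_sub_mulRight {K : Type*} [Field K] [NeZero (2 : K)] [Algebra K A]
    (hJ : IsUnit J) {s t : Submodule K A}
    (hs : s ≤ LinearMap.ker (LinearMap.mulLeft K J - LinearMap.mulRight K J))
    (ht : t ≤ LinearMap.ker (LinearMap.mulLeft K J + LinearMap.mulRight K J)) :
    (s ⊔ t) ⊓ LinearMap.ker (LinearMap.mulLeft K J - LinearMap.mulRight K J) = s := by
  rw [sup_inf_assoc_of_le _ hs, sup_eq_left]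
  rintro x ⟨hxt, hx⟩
  have hJx : (2 : K) • (J * x) = 0 := by
    rw [two_smul]
    nth_rw 1 [(mem_ker_mulLeft_sub_mulRight.1 hx).eq]
    rw [(mem_ker_mulLeft_add_mulRight.1 (ht hxt)).eq, neg_mul, add_neg_cancel]
  rw [hJ.mul_right_eq_zero.1 ((smul_eq_zero_iff_right two_ne_zero).1 hJx)]
  exact s.zero_mem

theorem bivectors_inf_ker_mulLeft_sub_mulRight {K ι : Type*} [Field K] [NeZero (2 : K)]
    [Algebra K A] [LinearOrder ι] {e : ι → A} (hJ : IsUnit J) {p : ι → Prop}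
    (hcomm : ∀ i, p i → Commute J (e i))
    (hanti : ∀ i, ¬p i → SemiconjBy J (e i) (-e i)) :
    bivectors K e ⊓ LinearMap.ker (LinearMap.mulLeft K J - LinearMap.mulRight K J) =
      Submodule.span K {x | ∃ i j, i < j ∧ (p i ↔ p j) ∧ x = e i * e j} := by
  have bivectors_eq_sup : bivectors K e =
      Submodule.span K {x | ∃ i j, i < j ∧ (p i ↔ p j) ∧ x = e i * e j} ⊔
        Submodule.span K {x | ∃ i j, i < j ∧ ¬(p i ↔ p j) ∧ x = e i * e j} := by
    rw [← Submodule.span_union, bivectors]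
    congr 1
    ext x
    constructor
    · rintro ⟨i, j, hij, hx⟩
      exact (em (p i ↔ p j)).imp (⟨i, j, hij, ·, hx⟩) (⟨i, j, hij, ·, hx⟩)
    · rintro (⟨i, j, hij, -, hx⟩ | ⟨i, j, hij, -, hx⟩) <;> exact ⟨i, j, hij, hx⟩
  rw [bivectors_eq_sup, sup_inf_ker_mulLeft_sub_mulRight hJ] <;> rw [Submodule.span_le]
  · rintro _ ⟨i, j, -, hij, rfl⟩
    refine mem_ker_mulLeft_sub_mulRight.2 ?_
    by_cases hi : p i
    · exact (hcomm i hi).mul_right (hcomm j (hij.1 hi))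
    · simpa [Commute] using (hanti i hi).mul_right (hanti j (hij.not.1 hi))
  · rintro _ ⟨i, j, -, hij, rfl⟩
    refine mem_ker_mulLeft_add_mulRight.2 ?_
    by_cases hi : p i
    · simpa using SemiconjBy.mul_right (hcomm i hi) (hanti j fun hj ↦ hij (iff_of_true hi hj))
    · simpa using (hanti i hi).mul_right (hcomm j (not_not.1 fun hj ↦ hij (iff_of_false hi hj)))

end Commutant

section ProductOfSubalgebras

variable {K A A₁ A₂ : Type*} [Field K] [Ring A] [Algebra K A] [Ring A₁] [Algebra K A₁]
  [Ring A₂] [Algebra K A₂] {L₁ : LieSubalgebra K A₁} {L₂ : LieSubalgebra K A₂}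

theorem exists_linearMap_injOn_range_of_injective (φ : (L₁ × L₂) →ₗ⁅K⁆ A)
    (hφ : Function.Injective φ) :
    ∃ f : A →ₗ[K] A₁ × A₂, Set.InjOn f φ.range ∧ f '' φ.range = {p | p.1 ∈ L₁ ∧ p.2 ∈ L₂} ∧
      ∀ a ∈ φ.range, ∀ b ∈ φ.range, f (a * b - b * a) = f a * f b - f b * f a := by
  obtain ⟨g, hg⟩ := φ.toLinearMap.exists_leftInverse_of_injective (LinearMap.ker_eq_bot.2 hφ)
  let f : A →ₗ[K] A₁ × A₂ := L₁.toSubmodule.subtype.prodMap L₂.toSubmodule.subtype ∘ₗ g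
  have f_apply (x : L₁ × L₂) : f (φ x) = (↑x.1, ↑x.2) :=
    congrArg (fun y : L₁ × L₂ ↦ ((y.1 : A₁), (y.2 : A₂))) (LinearMap.congr_fun hg x)
  refine ⟨f, ?_, ?_, ?_⟩
  · rintro _ ⟨x, rfl⟩ _ ⟨y, rfl⟩ hxy
    obtain ⟨hfst, hsnd⟩ := Prod.ext_iff.1 ((f_apply x).symm.trans (hxy.trans (f_apply y)))
    rw [Prod.ext (Subtype.ext hfst) (Subtype.ext hsnd)]
  · ext p
    constructor
    · rintro ⟨_, ⟨x, rfl⟩, rfl⟩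
      exact (f_apply x).symm ▸ ⟨x.1.2, x.2.2⟩
    · rintro ⟨hfst, hsnd⟩
      exact ⟨_, ⟨(⟨p.1, hfst⟩, ⟨p.2, hsnd⟩), rfl⟩, f_apply _⟩
  · rintro _ ⟨x, rfl⟩ _ ⟨y, rfl⟩
    change f (φ x * φ y - φ y * φ x) = f (φ x) * f (φ y) - f (φ y) * f (φ x)
    rw [← Ring.lie_def, ← LieHom.map_lie, f_apply, f_apply, f_apply]
    rfl

end ProductOfSubalgebras

section SplitOctonion

/-- The signs `sSgn` as integers, so that identities between them can be decided by evaluation. -/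
def sSgnInt : Fin 8 → Fin 8 → ℤ :=
  ![![1, 1, 1, 1, 1, 1, 1, 1],
    ![1, 1, 1, -1, 1, 1, -1, 1],
    ![1, -1, 1, 1, 1, 1, 1, -1],
    ![1, 1, -1, 1, 1, -1, 1, 1],
    ![1, -1, -1, -1, 1, -1, -1, -1],
    ![1, -1, -1, 1, 1, -1, 1, -1],
    ![1, 1, -1, -1, 1, -1, -1, 1],
    ![1, -1, 1, -1, 1, 1, -1, -1]]

theorem sSgn_eq_intCast (i j : Fin 8) : sSgn i j = sSgnInt i j := by
  fin_cases i <;> fin_cases j <;> simp [sSgn, sSgnInt]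

/-- The Clifford generators `Et` as integer matrices. -/
def EtInt (i : Fin 7) : Matrix (Fin 8) (Fin 8) ℤ :=
  of fun r c ↦ if r = sIdx i.succ c then sSgnInt i.succ c else 0

theorem Et_eq_map_EtInt : Et = (Int.castRingHom ℝ).mapMatrix ∘ EtInt := by
  ext i r c
  rw [Et, Lt, of_apply, Finset.sum_eq_single i.succ (by simp +contextual [et]) (by simp)]
  simp [et, EtInt, sSgn_eq_intCast]

/-- The squares of the generators `Et`: the diagonal form of signature `(4, 3)`. -/
def splitForm : Fin 7 → ℤ := ![1, 1, 1, 1, -1, -1, -1]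

theorem splitForm_ne_zero (i : Fin 7) : (splitForm i : ℝ) ≠ 0 :=
  Int.cast_ne_zero.2 (by decide +revert)

theorem isCliffordFamily_EtInt : IsCliffordFamily splitForm EtInt := by
  unfold IsCliffordFamily
  decide +kernel

theorem isCliffordFamily_Et : IsCliffordFamily (fun i ↦ (splitForm i : ℝ)) Et := by
  rw [Et_eq_map_EtInt]
  exact isCliffordFamily_EtInt.map_intCast _

/-- The Minkowski form of the generators `Ẽ⁴, …, Ẽ⁷`; it is the negative of `eta4`, which has the
same orthogonal Lie algebra. -/
def minkowski : Fin 4 → ℝ := ![1, -1, -1, -1]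

theorem minkowski_ne_zero (i : Fin 4) : minkowski i ≠ 0 := by
  fin_cases i <;> simp [minkowski]

theorem isCliffordFamily_Et_comp_finSumFinEquiv :
    IsCliffordFamily (Sum.elim (1 : Fin 3 → ℝ) minkowski) (Et ∘ finSumFinEquiv) := by
  have form_inl : ∀ i : Fin 3, splitForm (finSumFinEquiv (n := 4) (Sum.inl i)) = 1 := by decide
  have form_inr : ∀ i : Fin 4,
      splitForm (finSumFinEquiv (m := 3) (Sum.inr i)) = ![1, -1, -1, -1] i := by decide
  convert isCliffordFamily_Et.comp (finSumFinEquiv (m := 3) (n := 4)).injective using 1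
  ext (i | i)
  · simp [form_inl]
  · fin_cases i <;> simp [form_inr, minkowski]

theorem isUnit_Jt : IsUnit Jt := by
  have hEt (i : Fin 7) := isCliffordFamily_Et.isUnit (splitForm_ne_zero i)
  exact (hEt 3).mul (((hEt 4).mul (hEt 5)).mul (hEt 6))

theorem Jt_eq_list_prod : Jt = (([3, 4, 5, 6] : List (Fin 7)).map Et).prod := by
  simp [Jt, mul_assoc]

theorem commute_Jt_Et {i : Fin 7} (hi : (i : ℕ) ≤ 2) : Commute Jt (Et i) := by
  have even_count : ∀ i : Fin 7, (i : ℕ) ≤ 2 → [3, 4, 5, 6].countP (· ≠ i) = 4 := by decide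
  have hJt := isCliffordFamily_Et.semiconjBy_list_prod i [3, 4, 5, 6]
  rw [even_count i hi, ← Jt_eq_list_prod] at hJt
  simpa [Commute] using hJt

theorem semiconjBy_Jt_Et {i : Fin 7} (hi : ¬(i : ℕ) ≤ 2) : SemiconjBy Jt (Et i) (-Et i) := by
  have odd_count : ∀ i : Fin 7, ¬(i : ℕ) ≤ 2 → [3, 4, 5, 6].countP (· ≠ i) = 3 := by decide
  have hJt := isCliffordFamily_Et.semiconjBy_list_prod i [3, 4, 5, 6]
  rw [odd_count i hi, ← Jt_eq_list_prod] at hJt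
  simpa [pow_succ] using hJt

theorem commJtSub_eq_span_sup_span :
    commJtSub =
      Submodule.span ℝ {M | ∃ i j : Fin 7, i < j ∧ (j : ℕ) ≤ 2 ∧ M = Et i * Et j} ⊔
        Submodule.span ℝ {M | ∃ i j : Fin 7, i < j ∧ 3 ≤ (i : ℕ) ∧ M = Et i * Et j} := by
  refine (bivectors_inf_ker_mulLeft_sub_mulRight isUnit_Jt (fun _ ↦ commute_Jt_Et)
    (fun _ ↦ semiconjBy_Jt_Et)).trans ?_
  rw [← Submodule.span_union]
  congr 1
  ext M
  constructor
  · rintro ⟨i, j, hij, hiff, hM⟩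
    by_cases hj : (j : ℕ) ≤ 2
    · exact Or.inl ⟨i, j, hij, hj, hM⟩
    · exact Or.inr ⟨i, j, hij, by omega, hM⟩
  · rintro (⟨i, j, hij, hj, hM⟩ | ⟨i, j, hij, hi, hM⟩) <;> exact ⟨i, j, hij, by omega, hM⟩

theorem bivectors_Et_castAdd :
    bivectors ℝ (Et ∘ Fin.castAdd 4) =
      Submodule.span ℝ {M | ∃ i j : Fin 7, i < j ∧ (j : ℕ) ≤ 2 ∧ M = Et i * Et j} := by
  refine (bivectors_comp _ (Fin.strictMono_castAdd 4)).trans ?_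
  rw [Fin.range_castAdd]
  refine congrArg (Submodule.span ℝ) (Set.ext fun M ↦ exists₂_congr fun i j ↦ ?_)
  simp only [Set.mem_Iio, Fin.lt_def, Fin.val_natAdd, Fin.val_zero]
  grind

theorem bivectors_Et_natAdd :
    bivectors ℝ (Et ∘ Fin.natAdd (m := 4) 3) =
      Submodule.span ℝ {M | ∃ i j : Fin 7, i < j ∧ 3 ≤ (i : ℕ) ∧ M = Et i * Et j} := by
  refine (bivectors_comp _ (Fin.strictMono_natAdd 3)).trans ?_
  rw [Fin.range_natAdd]
  refine congrArg (Submodule.span ℝ) (Set.ext fun M ↦ exists₂_congr fun i j ↦ ?_)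
  simp only [Set.mem_ofPred_eq, Fin.lt_def]
  grind

theorem mem_skewAdjoint_minkowski_iff {X : Matrix (Fin 4) (Fin 4) ℝ} :
    X ∈ skewAdjointMatricesLieSubalgebra (diagonal minkowski) ↔ Xᵀ * eta4 + eta4 * X = 0 := by
  have eta4_eq : eta4 = -diagonal minkowski := by
    rw [diagonal_neg, eta4]
    congr 1
    ext i
    fin_cases i <;> simp [minkowski]
  rw [eta4_eq, mul_neg, neg_mul, ← neg_add, neg_eq_zero, add_eq_zero_iff_eq_neg]
  simp [Matrix.IsSkewAdjoint, Matrix.IsAdjointPair]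

/-- The spin representation of so(3) ⊕ so(1,3) by products of `Ẽ¹, Ẽ², Ẽ³` and of `Ẽ⁴, …, Ẽ⁷`. -/
def so3so13Hom :
    (skewAdjointMatricesLieSubalgebra (diagonal (1 : Fin 3 → ℝ)) ×
      skewAdjointMatricesLieSubalgebra (diagonal minkowski)) →ₗ⁅ℝ⁆ Matrix (Fin 8) (Fin 8) ℝ :=
  blockSpinHom isCliffordFamily_Et_comp_finSumFinEquiv (fun _ ↦ one_ne_zero) minkowski_ne_zero

theorem range_so3so13Hom : so3so13Hom.range.toSubmodule = commJtSub := by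
  rw [so3so13Hom, range_blockSpinHom, commJtSub_eq_span_sup_span, ← bivectors_Et_castAdd,
    ← bivectors_Et_natAdd]
  rfl

theorem so3so13Hom_injective : Function.Injective so3so13Hom :=
  blockSpinHom_injective _ _ _

theorem finrank_commJtSub : Module.finrank ℝ commJtSub = 9 := by
  rw [← range_so3so13Hom]
  exact (finrank_range_blockSpinHom _ _ _).trans (by decide)

theorem mul_sub_mul_mem_commJtSub {A B : Matrix (Fin 8) (Fin 8) ℝ} (hA : A ∈ commJtSub)
    (hB : B ∈ commJtSub) : A * B - B * A ∈ commJtSub := by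
  rw [← range_so3so13Hom] at *
  exact so3so13Hom.range.lie_mem hA hB

end SplitOctonion

end CliffordSpin

/-- the commutant of `J̃ = Ẽ⁴τ` in so(4,3) is the direct sum of the span
of `{Ẽ^iẼ^j : 1 ≤ i < j ≤ 3}` and the span of `{Ẽ^iẼ^j : 4 ≤ i < j ≤ 7}`; it is
9-dimensional and isomorphic, as a real Lie algebra, to so(3) ⊕ so(1,3). -/
theorem commutant_of_Jt_is_so3_so13 :
    commJtSub
      = Submodule.span ℝ {M | ∃ i j : Fin 7, i < j ∧ (j : ℕ) ≤ 2 ∧ M = Et i * Et j}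
        ⊔ Submodule.span ℝ {M | ∃ i j : Fin 7, i < j ∧ 3 ≤ (i : ℕ) ∧ M = Et i * Et j} ∧
    Module.finrank ℝ ↥commJtSub = 9 ∧
    (∀ A ∈ commJtSub, ∀ B ∈ commJtSub, A * B - B * A ∈ commJtSub) ∧
    ∃ f : Matrix (Fin 8) (Fin 8) ℝ →ₗ[ℝ]
        (Matrix (Fin 3) (Fin 3) ℝ × Matrix (Fin 4) (Fin 4) ℝ),
      Set.InjOn f commJtSub ∧
      f '' commJtSub = {p | p.1ᵀ = -p.1 ∧ p.2ᵀ * eta4 + eta4 * p.2 = 0} ∧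
      ∀ A ∈ commJtSub, ∀ B ∈ commJtSub,
        f (A * B - B * A) = f A * f B - f B * f A := by
  refine ⟨CliffordSpin.commJtSub_eq_span_sup_span, CliffordSpin.finrank_commJtSub,
    fun _ hA _ hB ↦ CliffordSpin.mul_sub_mul_mem_commJtSub hA hB, ?_⟩
  simp only [← CliffordSpin.mem_skewAdjoint_one_iff, ← CliffordSpin.mem_skewAdjoint_minkowski_iff,
    ← CliffordSpin.range_so3so13Hom]
  exact CliffordSpin.exists_linearMap_injOn_range_of_injective _ CliffordSpin.so3so13Hom_injective
end
end

section
/- On 𝕆⊗𝕆̃ with the two commuting complex structures J = E⁴⊗I and J̃ = -I⊗Ẽ¹Ẽ²Ẽ³, the three operators E⁴⊗Ẽ^i (i = 1,2,3) commute with both J and J̃, and together with ½ε^{ijk}I⊗Ẽ^jẼ^k they span a Lie algebra isomorphic to so(4) ≅ su(2) ⊕ su(2), with the two su(2) factors spanned by (½ε^{ijk}I⊗Ẽ^jẼ^k) ∓ E⁴⊗Ẽ^i respectively. -/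
open Matrix BigOperators

noncomputable section

def octIdx : Fin 8 → Fin 8 → Fin 8 :=
  ![![0, 1, 2, 3, 4, 5, 6, 7],
    ![1, 0, 7, 6, 5, 4, 3, 2],
    ![2, 7, 0, 5, 6, 3, 4, 1],
    ![3, 6, 5, 0, 7, 2, 1, 4],
    ![4, 5, 6, 7, 0, 1, 2, 3],
    ![5, 4, 3, 2, 1, 0, 7, 6],
    ![6, 3, 4, 1, 2, 7, 0, 5],
    ![7, 2, 1, 4, 3, 6, 5, 0]]

def octSgn : Fin 8 → Fin 8 → ℝ :=
  ![![1, 1, 1, 1, 1, 1, 1, 1],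
    ![1, -1, -1, 1, -1, 1, -1, 1],
    ![1, 1, -1, -1, -1, 1, 1, -1],
    ![1, -1, 1, -1, -1, -1, 1, 1],
    ![1, 1, 1, 1, -1, -1, -1, -1],
    ![1, -1, -1, 1, 1, -1, 1, -1],
    ![1, 1, -1, -1, 1, -1, -1, 1],
    ![1, -1, 1, -1, 1, 1, -1, -1]]

/-- Left multiplication by the octonion `x` as an 8×8 real matrix. -/
def Lo (x : Fin 8 → ℝ) : Matrix (Fin 8) (Fin 8) ℝ :=
  Matrix.of fun r c => ∑ i, if r = octIdx i c then octSgn i c * x i else 0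

/-- The imaginary unit octonion `e^(i+1)` as a vector. -/
def eo (i : Fin 7) : Fin 8 → ℝ := Pi.single i.succ 1

/-- The Clifford generator `E^(i+1) = L_{e^(i+1)}`. -/
def Eo (i : Fin 7) : Matrix (Fin 8) (Fin 8) ℝ := Lo (eo i)

/-- Matrix model of `𝕆 ⊗ 𝕆̃`: an operator `A⊗B` acts on an 8×8 matrix `Ψ` by `AΨBᵀ`. -/
abbrev EndOT := Matrix (Fin 8) (Fin 8) ℝ →ₗ[ℝ] Matrix (Fin 8) (Fin 8) ℝ

/-- `J = E⁴ ⊗ I`. -/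
def opJ : EndOT := LinearMap.mulLeft ℝ (Eo 3)

/-- `J̃ = -I ⊗ Ẽ¹Ẽ²Ẽ³`. -/
def opJt : EndOT := -(LinearMap.mulRight ℝ (Et 0 * Et 1 * Et 2)ᵀ)

/-- `T i = E⁴ ⊗ Ẽ^i`, `i = 1,2,3`. -/
def opT : Fin 3 → EndOT :=
  ![LinearMap.mulLeft ℝ (Eo 3) ∘ₗ LinearMap.mulRight ℝ (Et 0)ᵀ,
    LinearMap.mulLeft ℝ (Eo 3) ∘ₗ LinearMap.mulRight ℝ (Et 1)ᵀ,
    LinearMap.mulLeft ℝ (Eo 3) ∘ₗ LinearMap.mulRight ℝ (Et 2)ᵀ]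

/-- `S i = ½ε^{ijk} I ⊗ Ẽ^jẼ^k`, `i = 1,2,3`. -/
def opS : Fin 3 → EndOT :=
  ![LinearMap.mulRight ℝ (Et 1 * Et 2)ᵀ,
    LinearMap.mulRight ℝ (Et 2 * Et 0)ᵀ,
    LinearMap.mulRight ℝ (Et 0 * Et 1)ᵀ]

/-- The span of the `T i` and `S i`. -/
def so4Span : Submodule ℝ EndOT :=
  Submodule.span ℝ ({g | ∃ i : Fin 3, g = opT i ∨ g = opS i} : Set EndOT)

/-- The spans of `S i - T i` and of `S i + T i`. -/
def suLSpan : Submodule ℝ EndOT := Submodule.span ℝ {g | ∃ i : Fin 3, g = opS i - opT i}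
def suRSpan : Submodule ℝ EndOT := Submodule.span ℝ {g | ∃ i : Fin 3, g = opS i + opT i}

/-!
Write `γ^i = I ⊗ Ẽ^i`, three anticommuting square roots of `1` that commute with `J`, so that
`T_i = J γ^i` and `J̃ = -γ¹γ²γ³`. The product `c = J J̃` is an involution commuting with the
bivectors `S_i`, and `T_i = c S_i`. Hence `S_i ∓ T_i = (1 ∓ c) S_i`; since `(1 - c)(1 + c) = 0` the
two triples commute with each other, and since `(1 ∓ c)² = 2 (1 ∓ c)` each of them inherits the
commutation relations of the `S_i`, which are those of `K³` under the cross product up to scale.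

`K³` under the cross product is a simple Lie algebra, so every nonzero triple with its relations
spans a faithful copy of it, and two commuting ones span a faithful copy of `K³ × K³`. The
isomorphisms with `su(2)` and `so(4)` compare such copies: `so(4)` is spanned by the left and the
right quaternion multiplications. That the triples `S_i ∓ T_i` do not vanish is the statement
`c ≠ ±1`, that is `J̃ ≠ ±J`: a left multiplication `A Ψ` equal to a right multiplication `Ψ B` would
make `A` scalar, but a real scalar has no square equal to `-1`.
-/

section LieHom

variable {K A B L L' : Type*}

section CommRing

variable [CommRing K] [LieRing A] [LieAlgebra K A] [LieRing B] [LieAlgebra K B]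
  [LieRing L] [LieAlgebra K L]

theorem lieHom_injective_of_ne_zero [LieAlgebra.IsSimple K A] {φ : A →ₗ⁅K⁆ L}
    (hφ : φ ≠ 0) : Function.Injective φ := by
  rw [← LieHom.ker_eq_bot]
  refine (LieAlgebra.IsSimple.eq_bot_or_eq_top φ.ker).resolve_right fun htop => hφ ?_
  ext x
  have hx : x ∈ φ.ker := htop ▸ LieSubmodule.mem_top x
  exact LieHom.mem_ker.1 hx

/-- The homomorphism `(a, b) ↦ φ a + ψ b` from the product of two Lie algebras, determined by two
homomorphisms whose ranges commute. -/
def lieHomCoprod (φ : A →ₗ⁅K⁆ L) (ψ : B →ₗ⁅K⁆ L) (h : ∀ a b, ⁅φ a, ψ b⁆ = 0) :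
    A × B →ₗ⁅K⁆ L where
  __ := (φ : A →ₗ[K] L).coprod (ψ : B →ₗ[K] L)
  map_lie' {x y} := by
    have h' : ∀ a b, ⁅ψ b, φ a⁆ = 0 := fun a b => by rw [← lie_skew, h, neg_zero]
    simp [LieAlgebra.Prod.bracket_apply, h, h']

theorem lieHomCoprod_injective {φ : A →ₗ⁅K⁆ L} {ψ : B →ₗ⁅K⁆ L} (h : ∀ a b, ⁅φ a, ψ b⁆ = 0)
    (hφ : Function.Injective φ) (hψ : Function.Injective ψ) (hA : LieAlgebra.center K A = ⊥) :
    Function.Injective (lieHomCoprod φ ψ h) := by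
  rw [injective_iff_map_eq_zero]
  rintro ⟨a, b⟩ (hab : φ a + ψ b = 0)
  have ha : a ∈ LieAlgebra.center K A := by
    refine (LieModule.mem_maxTrivSubmodule K A A a).2 fun x => hφ ?_
    rw [map_zero, LieHom.map_lie, eq_neg_of_add_eq_zero_left hab, lie_neg, h, neg_zero]
  obtain rfl : a = 0 := by simpa [hA] using ha
  obtain rfl : b = 0 := hψ (by simpa using hab)
  rfl

theorem range_lieHomCoprod {φ : A →ₗ⁅K⁆ L} {ψ : B →ₗ⁅K⁆ L} (h : ∀ a b, ⁅φ a, ψ b⁆ = 0) :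
    (lieHomCoprod φ ψ h).range.toSubmodule = φ.range.toSubmodule ⊔ ψ.range.toSubmodule :=
  LinearMap.range_coprod _ _

end CommRing

theorem lie_eq_zero_of_mem_span_range [CommRing K] [LieRing L] [LieAlgebra K L]
    {ι ι' : Type*} {X : ι → L} {Y : ι' → L} (h : ∀ i j, ⁅X i, Y j⁆ = 0) {x y : L}
    (hx : x ∈ Submodule.span K (Set.range X)) (hy : y ∈ Submodule.span K (Set.range Y)) :
    ⁅x, y⁆ = 0 := by
  induction hx, hy using Submodule.span_induction₂ with
  | mem_mem _ _ hx hy =>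
    obtain ⟨⟨i, rfl⟩, j, rfl⟩ := And.intro hx hy
    exact h i j
  | zero_left | zero_right => simp
  | add_left _ _ _ _ _ _ h₁ h₂ => rw [add_lie, h₁, h₂, add_zero]
  | add_right _ _ _ _ _ _ h₁ h₂ => rw [lie_add, h₁, h₂, add_zero]
  | smul_left _ _ _ _ _ h => rw [smul_lie, h, smul_zero]
  | smul_right _ _ _ _ _ h => rw [lie_smul, h, smul_zero]

theorem exists_linearMap_onto_range [Field K] [LieRing A] [LieAlgebra K A]
    [LieRing L] [LieAlgebra K L] [LieRing L'] [LieAlgebra K L']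
    {φ : A →ₗ⁅K⁆ L} {ψ : A →ₗ⁅K⁆ L'} (hφ : Function.Injective φ) (hψ : Function.Injective ψ) :
    ∃ f : L →ₗ[K] L', Set.InjOn f φ.range ∧ f '' φ.range = ψ.range ∧
      ∀ x ∈ φ.range, ∀ y ∈ φ.range, f ⁅x, y⁆ = ⁅f x, f y⁆ := by
  obtain ⟨g, hg⟩ := (φ : A →ₗ[K] L).exists_leftInverse_of_injective (LinearMap.ker_eq_bot.2 hφ)
  let f : L →ₗ[K] L' := (ψ : A →ₗ[K] L') ∘ₗ g
  have hf : ∀ a, f (φ a) = ψ a := fun a => congrArg ψ (LinearMap.congr_fun hg a)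
  refine ⟨f, ?_, ?_, ?_⟩
  · rintro _ ⟨a, rfl⟩ _ ⟨b, rfl⟩ hab
    exact congrArg φ (hψ (by simpa [hf] using hab))
  · rw [LieHom.coe_range, LieHom.coe_range, ← Set.range_comp]
    exact congrArg Set.range (funext hf)
  · rintro _ ⟨a, rfl⟩ _ ⟨b, rfl⟩
    calc f ⁅φ a, φ b⁆ = ψ ⁅a, b⁆ := by rw [← LieHom.map_lie, hf]
      _ = ⁅f (φ a), f (φ b)⁆ := by rw [LieHom.map_lie, hf, hf]

end LieHom

/-- The space `K³` with the cross product as its Lie bracket. It is a type synonym because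
`Fin 3 → K` already carries the pointwise bracket. -/
def CrossAlgebra (K : Type*) : Type _ := Fin 3 → K

namespace CrossAlgebra

variable {K : Type*}

section CommRing

variable [CommRing K]

instance : LieRing (CrossAlgebra K) := Cross.lieRing (R := K)

instance : Module K (CrossAlgebra K) := inferInstanceAs (Module K (Fin 3 → K))

instance : LieAlgebra K (CrossAlgebra K) where
  lie_smul c u v := map_smul (crossProduct u) c v

theorem lie_apply (u v : CrossAlgebra K) (i : Fin 3) :
    ⁅u, v⁆ i = u (i + 1) * v (i + 2) - u (i + 2) * v (i + 1) := by
  fin_cases i <;> rfl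

/-- The standard basis of `K³`. -/
def e (i : Fin 3) : CrossAlgebra K := Pi.single i (1 : K)

theorem sum_smul_e (u : CrossAlgebra K) : ∑ i, u i • e i = u :=
  (pi_eq_sum_univ' (R := K) u).symm

theorem sum_e_smul {M : Type*} [AddCommGroup M] [Module K M] (X : Fin 3 → M) (i : Fin 3) :
    ∑ j, (e i : CrossAlgebra K) j • X j = X i :=
  (Fintype.linearCombination_apply_single K X i 1).trans (one_smul K _)

theorem lie_e_e (i : Fin 3) :
    ⁅(e i : CrossAlgebra K), (e (i + 1) : CrossAlgebra K)⁆ = e (i + 2) := by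
  funext k
  rw [lie_apply]
  fin_cases i <;> fin_cases k <;> simp [e]

theorem lie_lie_e (u : CrossAlgebra K) (i : Fin 3) :
    ⁅⁅u, (e (i + 1) : CrossAlgebra K)⁆, (e i : CrossAlgebra K)⁆ =
      u i • (e (i + 1) : CrossAlgebra K) := by
  funext k
  change _ = u i * e (i + 1) k
  simp only [lie_apply]
  fin_cases i <;> fin_cases k <;> simp [e]

end CommRing

variable [Field K]

theorem eq_top_of_e_mem {I : LieIdeal K (CrossAlgebra K)} {i : Fin 3} (hi : e i ∈ I) : I = ⊤ := by
  have step : ∀ {j : Fin 3}, e j ∈ I → e (j + 2) ∈ I := fun {j} hj =>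
    lie_e_e (K := K) j ▸ lie_mem_left K _ I _ _ hj
  have cyclic : ∀ i j : Fin 3, j = i ∨ j = i + 2 ∨ j = i + 2 + 2 := by decide
  have hall : ∀ j, e j ∈ I := fun j => by
    obtain rfl | rfl | rfl := cyclic i j
    exacts [hi, step hi, step (step hi)]
  refine eq_top_iff.2 fun u _ => ?_
  rw [← sum_smul_e u]
  exact sum_mem fun j _ => I.smul_mem _ (hall j)

instance : LieAlgebra.IsSimple K (CrossAlgebra K) where
  eq_bot_or_eq_top I := by
    refine or_iff_not_imp_left.2 fun hI => ?_
    obtain ⟨u, huI, hu⟩ : ∃ u ∈ I, u ≠ 0 := by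
      simpa [LieSubmodule.eq_bot_iff] using hI
    obtain ⟨i, hi⟩ := Function.ne_iff.1 hu
    have hmem : u i • (e (i + 1) : CrossAlgebra K) ∈ I :=
      lie_lie_e u i ▸ lie_mem_left K _ I _ _ (lie_mem_left K _ I _ _ huI)
    exact eq_top_of_e_mem ((I.smul_mem_iff hi).1 hmem)
  non_abelian h := by
    have h01 := lie_e_e (K := K) 0
    rw [h.trivial] at h01
    exact zero_ne_one (congrFun h01 2)

end CrossAlgebra

/-- A triple of elements of a Lie algebra with the cyclic commutation relations of the standard
basis of `K³` under the cross product, up to the common factor `κ`. -/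
def IsCrossTriple {K L : Type*} [CommRing K] [LieRing L] [LieAlgebra K L]
    (κ : K) (X : Fin 3 → L) : Prop :=
  ∀ i, ⁅X i, X (i + 1)⁆ = κ • X (i + 2)

namespace IsCrossTriple

variable {K L : Type*} [LieRing L]

theorem lie_sum_smul [CommRing K] [LieAlgebra K L] {κ : K} {X : Fin 3 → L}
    (h : IsCrossTriple κ X) (u v : CrossAlgebra K) :
    ⁅∑ i, u i • X i, ∑ i, v i • X i⁆ = κ • ∑ i, ⁅u, v⁆ i • X i := by
  have h₀₁ : ⁅X 0, X 1⁆ = κ • X 2 := h 0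
  have h₁₂ : ⁅X 1, X 2⁆ = κ • X 0 := h 1
  have h₂₀ : ⁅X 2, X 0⁆ = κ • X 1 := h 2
  have h₁₀ : ⁅X 1, X 0⁆ = -(κ • X 2) := by rw [← lie_skew, h₀₁]
  have h₂₁ : ⁅X 2, X 1⁆ = -(κ • X 0) := by rw [← lie_skew, h₁₂]
  have h₀₂ : ⁅X 0, X 2⁆ = -(κ • X 1) := by rw [← lie_skew, h₂₀]
  simp only [Fin.sum_univ_three, lie_smul, smul_lie, lie_add, add_lie, lie_self, h₀₁, h₁₂, h₂₀,
    h₁₀, h₂₁, h₀₂, CrossAlgebra.lie_apply, Fin.reduceAdd]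
  module

theorem lie_mem_span [CommRing K] [LieAlgebra K L] {κ : K} {X : Fin 3 → L}
    (h : IsCrossTriple κ X) {x y : L} (hx : x ∈ Submodule.span K (Set.range X))
    (hy : y ∈ Submodule.span K (Set.range X)) : ⁅x, y⁆ ∈ Submodule.span K (Set.range X) := by
  obtain ⟨u, rfl⟩ := (Submodule.mem_span_range_iff_exists_fun K).1 hx
  obtain ⟨v, rfl⟩ := (Submodule.mem_span_range_iff_exists_fun K).1 hy
  rw [h.lie_sum_smul u v]
  exact Submodule.smul_mem _ _ ((Submodule.mem_span_range_iff_exists_fun K).2 ⟨_, rfl⟩)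

theorem lie_mem_span_sup_span [CommRing K] [LieAlgebra K L] {κ κ' : K} {X Y : Fin 3 → L}
    (hX : IsCrossTriple κ X) (hY : IsCrossTriple κ' Y) (hXY : ∀ i j, ⁅X i, Y j⁆ = 0) {x y : L}
    (hx : x ∈ Submodule.span K (Set.range X) ⊔ Submodule.span K (Set.range Y))
    (hy : y ∈ Submodule.span K (Set.range X) ⊔ Submodule.span K (Set.range Y)) :
    ⁅x, y⁆ ∈ Submodule.span K (Set.range X) ⊔ Submodule.span K (Set.range Y) := by
  obtain ⟨x₁, hx₁, x₂, hx₂, rfl⟩ := Submodule.mem_sup.1 hx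
  obtain ⟨y₁, hy₁, y₂, hy₂, rfl⟩ := Submodule.mem_sup.1 hy
  have hcomm : ∀ a ∈ Submodule.span K (Set.range X), ∀ b ∈ Submodule.span K (Set.range Y),
      ⁅a, b⁆ = 0 := fun a ha b hb => lie_eq_zero_of_mem_span_range hXY ha hb
  have hcomm' : ⁅x₂, y₁⁆ = 0 := by rw [← lie_skew, hcomm y₁ hy₁ x₂ hx₂, neg_zero]
  rw [add_lie, lie_add, lie_add, hcomm x₁ hx₁ y₂ hy₂, hcomm', add_zero, zero_add]
  exact Submodule.add_mem_sup (hX.lie_mem_span hx₁ hy₁) (hY.lie_mem_span hx₂ hy₂)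

variable [Field K] [LieAlgebra K L] {κ κ' : K} {X Y : Fin 3 → L}

/-- The Lie algebra homomorphism from `K³` determined by a triple; rescaling by `κ⁻¹` absorbs the
factor in the commutation relations. -/
def toLieHom (h : IsCrossTriple κ X) (hκ : κ ≠ 0) : CrossAlgebra K →ₗ⁅K⁆ L where
  __ := (κ⁻¹ • Fintype.linearCombination K X : (Fin 3 → K) →ₗ[K] L)
  map_lie' {u v} := by
    change κ⁻¹ • ∑ i, ⁅u, v⁆ i • X i = ⁅κ⁻¹ • ∑ i, u i • X i, κ⁻¹ • ∑ i, v i • X i⁆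
    rw [smul_lie, lie_smul, h.lie_sum_smul, inv_smul_smul₀ hκ]

theorem toLieHom_apply (h : IsCrossTriple κ X) (hκ : κ ≠ 0) (u : CrossAlgebra K) :
    h.toLieHom hκ u = κ⁻¹ • ∑ i, u i • X i := rfl

theorem range_toLieHom (h : IsCrossTriple κ X) (hκ : κ ≠ 0) :
    (h.toLieHom hκ).range.toSubmodule = Submodule.span K (Set.range X) :=
  (LinearMap.range_smul (Fintype.linearCombination K X) _ (inv_ne_zero hκ)).trans
    (Fintype.range_linearCombination K X)

theorem toLieHom_injective (h : IsCrossTriple κ X) (hκ : κ ≠ 0) (hX : X ≠ 0) :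
    Function.Injective (h.toLieHom hκ) := by
  refine lieHom_injective_of_ne_zero fun h0 => hX (funext fun i => ?_)
  have hi : h.toLieHom hκ (CrossAlgebra.e i) = κ⁻¹ • X i := by
    rw [toLieHom_apply, CrossAlgebra.sum_e_smul]
  simpa [h0, hκ, eq_comm] using hi

theorem lie_toLieHom_toLieHom (hX : IsCrossTriple κ X) (hκ : κ ≠ 0)
    (hY : IsCrossTriple κ' Y) (hκ' : κ' ≠ 0) (h : ∀ i j, ⁅X i, Y j⁆ = 0) (u v : CrossAlgebra K) :
    ⁅hX.toLieHom hκ u, hY.toLieHom hκ' v⁆ = 0 := by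
  simp [toLieHom_apply, sum_lie, lie_sum, h]

/-- The Lie algebra homomorphism from `K³ × K³` determined by two commuting triples. -/
def prodLieHom (hX : IsCrossTriple κ X) (hκ : κ ≠ 0)
    (hY : IsCrossTriple κ' Y) (hκ' : κ' ≠ 0) (h : ∀ i j, ⁅X i, Y j⁆ = 0) :
    CrossAlgebra K × CrossAlgebra K →ₗ⁅K⁆ L :=
  lieHomCoprod (hX.toLieHom hκ) (hY.toLieHom hκ') (hX.lie_toLieHom_toLieHom hκ hY hκ' h)

theorem range_prodLieHom (hX : IsCrossTriple κ X) (hκ : κ ≠ 0)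
    (hY : IsCrossTriple κ' Y) (hκ' : κ' ≠ 0) (h : ∀ i j, ⁅X i, Y j⁆ = 0) :
    (hX.prodLieHom hκ hY hκ' h).range.toSubmodule =
      Submodule.span K (Set.range X) ⊔ Submodule.span K (Set.range Y) := by
  rw [prodLieHom, range_lieHomCoprod, range_toLieHom, range_toLieHom]

theorem prodLieHom_injective (hX : IsCrossTriple κ X) (hκ : κ ≠ 0)
    (hY : IsCrossTriple κ' Y) (hκ' : κ' ≠ 0) (h : ∀ i j, ⁅X i, Y j⁆ = 0)
    (hX₀ : X ≠ 0) (hY₀ : Y ≠ 0) : Function.Injective (hX.prodLieHom hκ hY hκ' h) :=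
  lieHomCoprod_injective _ (hX.toLieHom_injective hκ hX₀) (hY.toLieHom_injective hκ' hY₀) (by simp)

variable {L' : Type*} [LieRing L'] [LieAlgebra K L'] {μ μ' : K} {X' Y' : Fin 3 → L'}

theorem exists_linearMap_onto_span (hX : IsCrossTriple κ X) (hκ : κ ≠ 0) (hX₀ : X ≠ 0)
    (hX' : IsCrossTriple μ X') (hμ : μ ≠ 0) (hX'₀ : X' ≠ 0) :
    ∃ f : L →ₗ[K] L', Set.InjOn f (Submodule.span K (Set.range X)) ∧
      f '' Submodule.span K (Set.range X) = Submodule.span K (Set.range X') ∧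
      ∀ x ∈ Submodule.span K (Set.range X), ∀ y ∈ Submodule.span K (Set.range X),
        f ⁅x, y⁆ = ⁅f x, f y⁆ := by
  rw [← hX.range_toLieHom hκ, ← hX'.range_toLieHom hμ]
  exact exists_linearMap_onto_range (hX.toLieHom_injective hκ hX₀)
    (hX'.toLieHom_injective hμ hX'₀)

theorem exists_linearMap_onto_span_sup_span
    (hX : IsCrossTriple κ X) (hκ : κ ≠ 0) (hY : IsCrossTriple κ' Y) (hκ' : κ' ≠ 0)
    (hXY : ∀ i j, ⁅X i, Y j⁆ = 0) (hX₀ : X ≠ 0) (hY₀ : Y ≠ 0)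
    (hX' : IsCrossTriple μ X') (hμ : μ ≠ 0) (hY' : IsCrossTriple μ' Y') (hμ' : μ' ≠ 0)
    (hXY' : ∀ i j, ⁅X' i, Y' j⁆ = 0) (hX'₀ : X' ≠ 0) (hY'₀ : Y' ≠ 0) :
    ∃ f : L →ₗ[K] L',
      Set.InjOn f ↑(Submodule.span K (Set.range X) ⊔ Submodule.span K (Set.range Y)) ∧
      f '' ↑(Submodule.span K (Set.range X) ⊔ Submodule.span K (Set.range Y)) =
        ↑(Submodule.span K (Set.range X') ⊔ Submodule.span K (Set.range Y')) ∧
      ∀ x ∈ Submodule.span K (Set.range X) ⊔ Submodule.span K (Set.range Y),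
        ∀ y ∈ Submodule.span K (Set.range X) ⊔ Submodule.span K (Set.range Y),
          f ⁅x, y⁆ = ⁅f x, f y⁆ := by
  rw [← hX.range_prodLieHom hκ hY hκ' hXY, ← hX'.range_prodLieHom hμ hY' hμ' hXY']
  exact exists_linearMap_onto_range (hX.prodLieHom_injective hκ hY hκ' hXY hX₀ hY₀)
    (hX'.prodLieHom_injective hμ hY' hμ' hXY' hX'₀ hY'₀)


end IsCrossTriple

attribute [local instance] LieRing.ofAssociativeRing

section Involution

variable {R : Type*} [Ring R] {c : R}

theorem IsCrossTriple.one_add_mul {K : Type*} [CommRing K] [Algebra K R] {κ : K} {S : Fin 3 → R}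
    (h : IsCrossTriple κ S) (hc : c * c = 1) (hcS : ∀ i, Commute c (S i)) :
    IsCrossTriple (2 * κ) fun i => (1 + c) * S i := by
  have hsq : (1 + c) * (1 + c) = (2 : K) • (1 + c) := by
    rw [mul_add, add_mul, add_mul, hc, one_mul, one_mul, mul_one]
    module
  have hmul : ∀ i j, (1 + c) * S i * ((1 + c) * S j) = (2 : K) • ((1 + c) * (S i * S j)) :=
    fun i j => by
      rw [((Commute.one_left _).add_left (hcS i)).symm.mul_mul_mul_comm, hsq, smul_mul_assoc]
  intro i
  rw [Ring.lie_def, hmul, hmul, ← smul_sub, ← mul_sub, ← Ring.lie_def, h i, mul_smul_comm,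
    mul_smul]

theorem one_sub_mul_mul_one_add_mul_eq_zero {x : R} (hc : c * c = 1) (hcx : Commute c x) (y : R) :
    (1 - c) * x * ((1 + c) * y) = 0 := by
  have hfac : (1 - c) * (1 + c) = 0 := by
    rw [sub_mul, one_mul, mul_add, mul_one, hc, add_comm c, sub_self]
  rw [((Commute.one_left x).add_left hcx).symm.mul_mul_mul_comm, hfac, zero_mul]

theorem lie_one_sub_mul_one_add_mul_eq_zero {x y : R} (hc : c * c = 1) (hcx : Commute c x)
    (hcy : Commute c y) : ⁅(1 - c) * x, (1 + c) * y⁆ = 0 := by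
  have hyx : (1 + c) * y * ((1 - c) * x) = 0 := by
    simpa [sub_eq_add_neg] using
      one_sub_mul_mul_one_add_mul_eq_zero (c := -c) (by simpa using hc) hcy.neg_left x
  rw [Ring.lie_def, one_sub_mul_mul_one_add_mul_eq_zero hc hcx, hyx, sub_zero]

end Involution

section Clifford

variable {R R' : Type*} [Ring R] [Ring R'] {γ : Fin 3 → R}

/-- Three elements of a ring generating a Clifford algebra of signature `(3, 0)`: they square to
`1` and anticommute. -/
structure IsCliffordTriple (γ : Fin 3 → R) : Prop where
  mul_self : ∀ i, γ i * γ i = 1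
  anticomm : ∀ i, γ (i + 1) * γ i = -(γ i * γ (i + 1))

/-- The bivector `½ ε^{ijk} γ^j γ^k`, whose two nonzero terms agree when the `γ^i` anticommute. -/
def cliffordBivector (γ : Fin 3 → R) (i : Fin 3) : R := γ (i + 1) * γ (i + 2)

/-- The volume element `γ¹γ²γ³` of the Clifford algebra. -/
def cliffordVolume (γ : Fin 3 → R) : R := γ 0 * γ 1 * γ 2

namespace IsCliffordTriple

theorem map (h : IsCliffordTriple γ) (f : R →+* R') : IsCliffordTriple (f ∘ γ) where
  mul_self i := by simp [← map_mul, h.mul_self]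
  anticomm i := by simp [← map_mul, h.anticomm]

theorem anticomm_add_two (h : IsCliffordTriple γ) (i : Fin 3) :
    γ i * γ (i + 2) = -(γ (i + 2) * γ i) := by
  have hi : i + 2 + 1 = i := by decide +revert
  simpa only [hi] using h.anticomm (i + 2)

theorem commute_bivector (h : IsCliffordTriple γ) (i : Fin 3) :
    Commute (γ i) (cliffordBivector γ i) := by
  calc γ i * (γ (i + 1) * γ (i + 2)) = -(γ (i + 1) * γ i) * γ (i + 2) := by
        rw [h.anticomm, neg_neg, mul_assoc]
    _ = γ (i + 1) * γ (i + 2) * γ i := by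
        rw [neg_mul, mul_assoc, h.anticomm_add_two, mul_neg, neg_neg, mul_assoc]

theorem bivector_mul_self (h : IsCliffordTriple γ) (i : Fin 3) :
    cliffordBivector γ i * cliffordBivector γ i = -1 := by
  have hanti : γ (i + 2) * γ (i + 1) = -(γ (i + 1) * γ (i + 2)) := by
    simpa only [add_assoc, Fin.reduceAdd] using h.anticomm (i + 1)
  calc γ (i + 1) * γ (i + 2) * (γ (i + 1) * γ (i + 2))
      = γ (i + 1) * (γ (i + 2) * γ (i + 1)) * γ (i + 2) := by noncomm_ring
    _ = -(γ (i + 1) * γ (i + 1) * (γ (i + 2) * γ (i + 2))) := by rw [hanti]; noncomm_ring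
    _ = -1 := by rw [h.mul_self, h.mul_self, one_mul]

theorem mul_bivector (h : IsCliffordTriple γ) (i : Fin 3) :
    γ i * cliffordBivector γ i = cliffordVolume γ := by
  have cyclic : ∀ i, γ (i + 1) * cliffordBivector γ (i + 1) = γ i * cliffordBivector γ i := by
    intro i
    have hi : i + 1 + 2 = i := by decide +revert
    rw [h.commute_bivector i, cliffordBivector, cliffordBivector, hi, add_assoc, mul_assoc]
    rfl
  have h₀ : γ 0 * cliffordBivector γ 0 = cliffordVolume γ := (mul_assoc _ _ _).symm
  have h₁ := (cyclic 0).trans h₀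
  fin_cases i
  exacts [h₀, h₁, (cyclic 1).trans h₁]

theorem commute_volume (h : IsCliffordTriple γ) (i : Fin 3) : Commute (cliffordVolume γ) (γ i) := by
  rw [← h.mul_bivector i]
  exact (Commute.refl (γ i)).mul_left (h.commute_bivector i).symm

theorem commute_volume_bivector (h : IsCliffordTriple γ) (i : Fin 3) :
    Commute (cliffordVolume γ) (cliffordBivector γ i) :=
  (h.commute_volume _).mul_right (h.commute_volume _)

theorem volume_mul_bivector (h : IsCliffordTriple γ) (i : Fin 3) :
    cliffordVolume γ * cliffordBivector γ i = -γ i := by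
  rw [← h.mul_bivector i, mul_assoc, h.bivector_mul_self, mul_neg_one]

theorem volume_mul_self (h : IsCliffordTriple γ) : cliffordVolume γ * cliffordVolume γ = -1 := by
  nth_rw 2 [← h.mul_bivector 0]
  rw [(h.commute_volume 0).left_comm, h.volume_mul_bivector, mul_neg, h.mul_self]

theorem isCrossTriple_bivector (h : IsCliffordTriple γ) {K : Type*} [CommRing K] [Algebra K R] :
    IsCrossTriple (-2 : K) (cliffordBivector γ) := by
  intro i
  have h₁ : i + 1 + 1 = i + 2 := by decide +revert
  have h₂ : i + 1 + 2 = i := by decide +revert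
  have h₃ : i + 2 + 1 = i := by decide +revert
  have h₄ : i + 2 + 2 = i + 1 := by decide +revert
  have hcomm := h.commute_bivector (i + 2)
  simp only [cliffordBivector, h₁, h₂, h₃, h₄] at hcomm ⊢
  have hforward : γ (i + 1) * γ (i + 2) * (γ (i + 2) * γ i) = -(γ i * γ (i + 1)) := by
    rw [mul_assoc, ← mul_assoc (γ (i + 2)), h.mul_self, one_mul, h.anticomm]
  have hbackward : γ (i + 2) * γ i * (γ (i + 1) * γ (i + 2)) = γ i * γ (i + 1) := by
    rw [mul_assoc, ← mul_assoc (γ i), ← hcomm.eq, ← mul_assoc, h.mul_self, one_mul]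
  rw [Ring.lie_def, hforward, hbackward]
  module

end IsCliffordTriple

end Clifford

section ComplexStructure

variable {R : Type*} [Ring R] {γ : Fin 3 → R} {J : R}

/-- The product `J J̃` of a complex structure `J` commuting with the `γ^i` and the complex
structure `J̃ = -γ¹γ²γ³`. -/
def complexStructureProd (γ : Fin 3 → R) (J : R) : R := J * -cliffordVolume γ

/-- The combination `½ ε^{ijk} γ^j γ^k + J γ^i`; replacing `J` by `-J` gives the combination with
the opposite relative sign. -/
def chiralBivector (γ : Fin 3 → R) (J : R) (i : Fin 3) : R := cliffordBivector γ i + J * γ i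

theorem commute_cliffordVolume (hJγ : ∀ i, Commute J (γ i)) : Commute J (cliffordVolume γ) :=
  ((hJγ 0).mul_right (hJγ 1)).mul_right (hJγ 2)

theorem chiralBivector_neg (i : Fin 3) :
    chiralBivector γ (-J) i = cliffordBivector γ i - J * γ i := by
  rw [chiralBivector, neg_mul, sub_eq_add_neg]

theorem complexStructureProd_neg : complexStructureProd γ (-J) = -complexStructureProd γ J :=
  neg_mul _ _

namespace IsCliffordTriple

theorem complexStructureProd_mul_self (h : IsCliffordTriple γ) (hJ : J * J = -1)
    (hJγ : ∀ i, Commute J (γ i)) : complexStructureProd γ J * complexStructureProd γ J = 1 := by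
  rw [complexStructureProd, (commute_cliffordVolume hJγ).neg_right.symm.mul_mul_mul_comm, hJ,
    neg_mul_neg, h.volume_mul_self, neg_mul_neg, one_mul]

theorem commute_complexStructureProd_bivector (h : IsCliffordTriple γ)
    (hJγ : ∀ i, Commute J (γ i)) (i : Fin 3) :
    Commute (complexStructureProd γ J) (cliffordBivector γ i) :=
  ((hJγ _).mul_right (hJγ _)).mul_left (h.commute_volume_bivector i).neg_left

theorem complexStructureProd_mul_bivector (h : IsCliffordTriple γ) (i : Fin 3) :
    complexStructureProd γ J * cliffordBivector γ i = J * γ i := by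
  rw [complexStructureProd, mul_assoc, neg_mul, h.volume_mul_bivector, neg_neg]

theorem chiralBivector_eq (h : IsCliffordTriple γ) :
    chiralBivector γ J = fun i => (1 + complexStructureProd γ J) * cliffordBivector γ i := by
  funext i
  rw [chiralBivector, add_mul, one_mul, h.complexStructureProd_mul_bivector]

theorem isCrossTriple_chiralBivector {K : Type*} [CommRing K] [Algebra K R]
    (h : IsCliffordTriple γ) (hJ : J * J = -1) (hJγ : ∀ i, Commute J (γ i)) :
    IsCrossTriple (2 * -2 : K) (chiralBivector γ J) := by
  rw [h.chiralBivector_eq]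
  exact h.isCrossTriple_bivector.one_add_mul (h.complexStructureProd_mul_self hJ hJγ)
    (h.commute_complexStructureProd_bivector hJγ)

theorem lie_chiralBivector_neg_chiralBivector (h : IsCliffordTriple γ) (hJ : J * J = -1)
    (hJγ : ∀ i, Commute J (γ i)) (i j : Fin 3) :
    ⁅chiralBivector γ (-J) i, chiralBivector γ J j⁆ = 0 := by
  rw [h.chiralBivector_eq, h.chiralBivector_eq, complexStructureProd_neg, ← sub_eq_add_neg]
  exact lie_one_sub_mul_one_add_mul_eq_zero (h.complexStructureProd_mul_self hJ hJγ)
    (h.commute_complexStructureProd_bivector hJγ i) (h.commute_complexStructureProd_bivector hJγ j)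

theorem chiralBivector_ne_zero (h : IsCliffordTriple γ) (hJ : J * J = -1)
    (hne : J ≠ -cliffordVolume γ) : chiralBivector γ J ≠ 0 := by
  refine fun h₀ => hne ?_
  have hprod : (1 + complexStructureProd γ J) * cliffordBivector γ 0 = 0 :=
    (congrFun h.chiralBivector_eq 0).symm.trans (congrFun h₀ 0)
  have hc : 1 + complexStructureProd γ J = 0 := by
    rw [← neg_eq_zero, ← mul_neg_one, ← h.bivector_mul_self 0, ← mul_assoc, hprod, zero_mul]
  have hprod_eq : J * -cliffordVolume γ = -1 := eq_neg_of_add_eq_zero_right hc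
  calc J = -(J * -1) := by rw [mul_neg_one, neg_neg]
    _ = -(J * J * -cliffordVolume γ) := by rw [← hprod_eq, mul_assoc]
    _ = -cliffordVolume γ := by rw [hJ, neg_one_mul, neg_neg]

end IsCliffordTriple

end ComplexStructure

theorem span_sub_sup_span_add {K M ι : Type*} [Ring K] [Invertible (2 : K)] [AddCommGroup M]
    [Module K M] (S T : ι → M) :
    Submodule.span K (Set.range (S - T)) ⊔ Submodule.span K (Set.range (S + T)) =
      Submodule.span K (Set.range T ∪ Set.range S) := by
  have mem_span : ∀ {U : Set M} {x : M}, x ∈ U → x ∈ Submodule.span K U :=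
    fun hx => Submodule.subset_span hx
  rw [← Submodule.span_union]
  apply le_antisymm <;> rw [Submodule.span_le]
  · rintro _ (⟨i, rfl⟩ | ⟨i, rfl⟩)
    · exact sub_mem (mem_span (.inr ⟨i, rfl⟩)) (mem_span (.inl ⟨i, rfl⟩))
    · exact add_mem (mem_span (.inr ⟨i, rfl⟩)) (mem_span (.inl ⟨i, rfl⟩))
  · have hmem : ∀ i, (S - T) i ∈ Submodule.span K (Set.range (S - T) ∪ Set.range (S + T)) ∧
        (S + T) i ∈ Submodule.span K (Set.range (S - T) ∪ Set.range (S + T)) := fun i =>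
      ⟨mem_span (.inl ⟨i, rfl⟩), mem_span (.inr ⟨i, rfl⟩)⟩
    rintro _ (⟨i, rfl⟩ | ⟨i, rfl⟩)
    · have hT : T i = (⅟2 : K) • ((S + T) i - (S - T) i) := by
        rw [Pi.add_apply, Pi.sub_apply, add_sub_sub_cancel, ← two_smul K, invOf_smul_smul]
      exact hT ▸ Submodule.smul_mem _ _ (sub_mem (hmem i).2 (hmem i).1)
    · have hS : S i = (⅟2 : K) • ((S - T) i + (S + T) i) := by
        rw [Pi.add_apply, Pi.sub_apply, sub_add_add_cancel, ← two_smul K, invOf_smul_smul]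
      exact hS ▸ Submodule.smul_mem _ _ (add_mem (hmem i).1 (hmem i).2)

/-- The Pauli matrices times `i`, up to order and sign: a basis of `su(2)`. -/
def su2Triple : Fin 3 → Matrix (Fin 2) (Fin 2) ℂ :=
  ![!![0, Complex.I; Complex.I, 0], !![0, 1; -1, 0], !![Complex.I, 0; 0, -Complex.I]]

theorem isCrossTriple_su2Triple : IsCrossTriple (-2 : ℝ) su2Triple := by
  intro i
  have hforward : su2Triple i * su2Triple (i + 1) = -su2Triple (i + 2) := by
    fin_cases i <;> simp [su2Triple]
  have hbackward : su2Triple (i + 1) * su2Triple i = su2Triple (i + 2) := by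
    fin_cases i <;> simp [su2Triple]
  rw [Ring.lie_def, hforward, hbackward]
  module

theorem su2Triple_ne_zero : su2Triple ≠ 0 := fun h => one_ne_zero (congrFun₂ (congrFun h 1) 0 1)

theorem coe_span_su2Triple :
    (Submodule.span ℝ (Set.range su2Triple) : Set (Matrix (Fin 2) (Fin 2) ℂ)) =
      {A | Aᴴ = -A ∧ A.trace = 0} := by
  ext A
  rw [SetLike.mem_coe, Set.mem_ofPred_eq, Submodule.mem_span_range_iff_exists_fun]
  constructor
  · rintro ⟨a, rfl⟩
    constructor
    · ext i j : 1
      fin_cases i <;> fin_cases j <;> simp [su2Triple, Fin.sum_univ_three, add_comm]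
    · simp [su2Triple, Fin.sum_univ_three, Matrix.trace_fin_two]
  · rintro ⟨hskew, htrace⟩
    have hentry : ∀ i j, star (A j i) = -A i j := fun i j => congrFun₂ hskew i j
    have h₀₀ : (A 0 0).re = 0 := self_eq_neg.1 (congrArg Complex.re (hentry 0 0))
    have h₁₀ : A 1 0 = -star (A 0 1) := by rw [hentry 1 0, neg_neg]
    have h₁₁ : A 1 1 = -A 0 0 := eq_neg_of_add_eq_zero_right (Matrix.trace_fin_two A ▸ htrace)
    refine ⟨![(A 0 1).im, (A 0 1).re, (A 0 0).im], ?_⟩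
    ext i j : 1
    fin_cases i <;> fin_cases j <;>
      simp [su2Triple, Fin.sum_univ_three, Complex.ext_iff, h₀₀, h₁₀, h₁₁]

section Quaternion

variable (K : Type*)

/-- Left multiplication by the quaternions `i`, `j`, `k` on `K⁴`. -/
def quaternionLeft [CommRing K] : Fin 3 → Matrix (Fin 4) (Fin 4) K :=
  ![!![0, -1, 0, 0; 1, 0, 0, 0; 0, 0, 0, -1; 0, 0, 1, 0],
    !![0, 0, -1, 0; 0, 0, 0, 1; 1, 0, 0, 0; 0, -1, 0, 0],
    !![0, 0, 0, -1; 0, 0, -1, 0; 0, 1, 0, 0; 1, 0, 0, 0]]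

/-- Right multiplication by the quaternions `i`, `j`, `k` on `K⁴`. -/
def quaternionRight [CommRing K] : Fin 3 → Matrix (Fin 4) (Fin 4) K :=
  ![!![0, -1, 0, 0; 1, 0, 0, 0; 0, 0, 0, 1; 0, 0, -1, 0],
    !![0, 0, -1, 0; 0, 0, 0, -1; 1, 0, 0, 0; 0, 1, 0, 0],
    !![0, 0, 0, -1; 0, 0, 1, 0; 0, -1, 0, 0; 1, 0, 0, 0]]

theorem isCrossTriple_quaternionLeft [CommRing K] : IsCrossTriple (2 : K) (quaternionLeft K) := by
  intro i
  have hforward : quaternionLeft K i * quaternionLeft K (i + 1) = quaternionLeft K (i + 2) := by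
    fin_cases i <;> simp [quaternionLeft]
  have hbackward : quaternionLeft K (i + 1) * quaternionLeft K i = -quaternionLeft K (i + 2) := by
    fin_cases i <;> simp [quaternionLeft]
  rw [Ring.lie_def, hforward, hbackward, sub_neg_eq_add, two_smul]

theorem isCrossTriple_quaternionRight [CommRing K] :
    IsCrossTriple (-2 : K) (quaternionRight K) := by
  intro i
  have hforward : quaternionRight K i * quaternionRight K (i + 1) = -quaternionRight K (i + 2) := by
    fin_cases i <;> simp [quaternionRight]
  have hbackward : quaternionRight K (i + 1) * quaternionRight K i = quaternionRight K (i + 2) := by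
    fin_cases i <;> simp [quaternionRight]
  rw [Ring.lie_def, hforward, hbackward]
  module

theorem lie_quaternionLeft_quaternionRight [CommRing K] (i j : Fin 3) :
    ⁅quaternionLeft K i, quaternionRight K j⁆ = 0 := by
  rw [Ring.lie_def]
  fin_cases i <;> fin_cases j <;> simp [quaternionLeft, quaternionRight]

theorem quaternionLeft_ne_zero [CommRing K] [Nontrivial K] : quaternionLeft K ≠ 0 := fun h =>
  one_ne_zero (congrFun₂ (congrFun h 0) 1 0)

theorem quaternionRight_ne_zero [CommRing K] [Nontrivial K] : quaternionRight K ≠ 0 := fun h =>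
  one_ne_zero (congrFun₂ (congrFun h 0) 1 0)

theorem sum_smul_quaternionLeft [CommRing K] (a : Fin 3 → K) :
    ∑ i, a i • quaternionLeft K i =
      !![0, -a 0, -a 1, -a 2; a 0, 0, -a 2, a 1; a 1, a 2, 0, -a 0; a 2, -a 1, a 0, 0] := by
  simp [quaternionLeft, Fin.sum_univ_three]

theorem sum_smul_quaternionRight [CommRing K] (a : Fin 3 → K) :
    ∑ i, a i • quaternionRight K i =
      !![0, -a 0, -a 1, -a 2; a 0, 0, a 2, -a 1; a 1, -a 2, 0, a 0; a 2, a 1, -a 0, 0] := by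
  simp [quaternionRight, Fin.sum_univ_three]

theorem coe_span_quaternionLeft_sup_span_quaternionRight [Field K] [NeZero (2 : K)] :
    (↑(Submodule.span K (Set.range (quaternionLeft K)) ⊔
      Submodule.span K (Set.range (quaternionRight K))) : Set (Matrix (Fin 4) (Fin 4) K)) =
      {A | Aᵀ = -A} := by
  ext A
  simp only [SetLike.mem_coe, Set.mem_ofPred_eq, Submodule.mem_sup,
    Submodule.mem_span_range_iff_exists_fun]
  constructor
  · rintro ⟨_, ⟨a, rfl⟩, _, ⟨b, rfl⟩, rfl⟩
    rw [sum_smul_quaternionLeft, sum_smul_quaternionRight]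
    ext i j
    fin_cases i <;> fin_cases j <;> simp <;> ring
  · intro hskew
    have hentry : ∀ i j, A i j = -A j i := fun i j => congrFun₂ hskew j i
    have hdiag : ∀ i, A i i = 0 := fun i => by
      have h2 : 2 * A i i = 0 := by rw [two_mul, ← eq_neg_iff_add_eq_zero, ← hentry]
      exact (mul_eq_zero.1 h2).resolve_left two_ne_zero
    refine ⟨_, ⟨![(A 1 0 + A 3 2) / 2, (A 2 0 + A 1 3) / 2, (A 3 0 + A 2 1) / 2], rfl⟩,
      _, ⟨![(A 1 0 - A 3 2) / 2, (A 2 0 - A 1 3) / 2, (A 3 0 - A 2 1) / 2], rfl⟩, ?_⟩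
    rw [sum_smul_quaternionLeft, sum_smul_quaternionRight]
    ext i j
    fin_cases i <;> fin_cases j <;>
      simp [hdiag, hentry 0, hentry 1 2, hentry 2 3, hentry 3 1] <;> field_simp <;> ring

end Quaternion

section Monomial

variable {n R : Type*} [DecidableEq n] [Ring R]

/-- The matrix of `e_c ↦ s c • e_{p c}`. Left multiplication by a unit octonion or split octonion
has this form, since a product of two units is a unit up to sign. -/
def monomialMatrix (p : n → n) (s : n → R) : Matrix n n R :=
  Matrix.of fun r c => if r = p c then s c else 0

theorem monomialMatrix_mul [Fintype n] (p q : n → n) (s t : n → R) :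
    monomialMatrix p s * monomialMatrix q t = monomialMatrix (p ∘ q) fun c => s (q c) * t c := by
  ext r c
  simp [monomialMatrix, Matrix.mul_apply]

theorem monomialMatrix_neg (p : n → n) (s : n → R) :
    monomialMatrix p (-s) = -monomialMatrix p s := by
  ext r c
  simp only [monomialMatrix, Matrix.of_apply, Matrix.neg_apply, Pi.neg_apply, neg_ite, neg_zero]

theorem monomialMatrix_id_one : monomialMatrix (id : n → n) (1 : n → R) = 1 := by
  ext r c
  simp [monomialMatrix, Matrix.one_apply]

theorem of_sum_ite_mul_single {ι : Type*} [Fintype ι] [DecidableEq ι] (p : ι → n → n)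
    (s : ι → n → R) (i : ι) :
    (Matrix.of fun r c => ∑ j, if r = p j c then s j c * (Pi.single i 1 : ι → R) j else 0) =
      monomialMatrix (p i) (s i) := by
  ext r c
  simp only [monomialMatrix, Matrix.of_apply]
  rw [Finset.sum_eq_single i (fun j _ hj => by simp [hj]) (by simp), Pi.single_eq_same, mul_one]

end Monomial

theorem Eo_eq_monomialMatrix (i : Fin 7) :
    Eo i = monomialMatrix (octIdx i.succ) (octSgn i.succ) :=
  of_sum_ite_mul_single octIdx octSgn i.succ

theorem Et_eq_monomialMatrix (i : Fin 7) :
    Et i = monomialMatrix (sIdx i.succ) (sSgn i.succ) :=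
  of_sum_ite_mul_single sIdx sSgn i.succ

theorem Eo_mul_self (i : Fin 7) : Eo i * Eo i = -1 := by
  have hidx : octIdx i.succ ∘ octIdx i.succ = id := by decide +revert
  have hsgn : (fun c => octSgn i.succ (octIdx i.succ c) * octSgn i.succ c) = -1 := by
    funext c
    fin_cases i <;> fin_cases c <;> simp [octIdx, octSgn]
  rw [Eo_eq_monomialMatrix, monomialMatrix_mul, hidx, hsgn, monomialMatrix_neg,
    monomialMatrix_id_one]

theorem isCliffordTriple_Et : IsCliffordTriple fun i : Fin 3 => Et (Fin.castAdd 4 i) where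
  mul_self i := by
    have hidx : sIdx (Fin.castAdd 4 i).succ ∘ sIdx (Fin.castAdd 4 i).succ = id := by decide +revert
    have hsgn : (fun c => sSgn (Fin.castAdd 4 i).succ (sIdx (Fin.castAdd 4 i).succ c) *
        sSgn (Fin.castAdd 4 i).succ c) = 1 := by
      funext c
      fin_cases i <;> fin_cases c <;> simp [sIdx, sSgn]
    rw [Et_eq_monomialMatrix, monomialMatrix_mul, hidx, hsgn, monomialMatrix_id_one]
  anticomm i := by
    have hidx : sIdx (Fin.castAdd 4 (i + 1)).succ ∘ sIdx (Fin.castAdd 4 i).succ =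
        sIdx (Fin.castAdd 4 i).succ ∘ sIdx (Fin.castAdd 4 (i + 1)).succ := by decide +revert
    have hsgn : (fun c => sSgn (Fin.castAdd 4 (i + 1)).succ (sIdx (Fin.castAdd 4 i).succ c) *
          sSgn (Fin.castAdd 4 i).succ c) =
        -fun c => sSgn (Fin.castAdd 4 i).succ (sIdx (Fin.castAdd 4 (i + 1)).succ c) *
          sSgn (Fin.castAdd 4 (i + 1)).succ c := by
      funext c
      fin_cases i <;> fin_cases c <;> simp [sIdx, sSgn]
    rw [Et_eq_monomialMatrix, Et_eq_monomialMatrix, monomialMatrix_mul, monomialMatrix_mul, hidx,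
      hsgn, monomialMatrix_neg]

section Tensor

variable {n R : Type*} [Fintype n] [DecidableEq n] [CommRing R]

/-- The operator `I ⊗ B`. -/
def idTensor : Matrix n n R →ₐ[R] Module.End R (Matrix n n R) :=
  AlgHom.ofLinearMap
    ((LinearMap.mul R (Matrix n n R)).flip ∘ₗ (Matrix.transposeLinearEquiv n n R R).toLinearMap)
    (by ext; simp) fun A B => by
      ext1 Ψ
      simp [Matrix.mul_assoc]

theorem mulLeft_ne_mulRight [Nonempty n] [LinearOrder R] [IsStrictOrderedRing R]
    {A B : Matrix n n R} (hA : A * A = -1) :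
    LinearMap.mulLeft R A ≠ LinearMap.mulRight R B := by
  intro h
  have hmul : ∀ Ψ, A * Ψ = Ψ * B := LinearMap.congr_fun h
  obtain rfl : A = B := by simpa using hmul 1
  obtain ⟨a, rfl⟩ := Matrix.mem_range_scalar_of_commute_single (M := A) fun i j _ => (hmul _).symm
  obtain ⟨i⟩ := ‹Nonempty n›
  have hsq : a * a = -1 := by simpa using congrFun₂ hA i i
  linarith [mul_self_nonneg a]

end Tensor

theorem opJ_mul_opJ : opJ * opJ = -1 := by
  rw [opJ, Module.End.mul_eq_comp, ← LinearMap.mulLeft_mul, Eo_mul_self]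
  ext1 Ψ
  simp

/-- The operators `γ^i = I ⊗ Ẽ^i`, `i = 1,2,3`. -/
def opGamma (i : Fin 3) : EndOT := idTensor (Et (Fin.castAdd 4 i))

theorem isCliffordTriple_opGamma : IsCliffordTriple opGamma :=
  isCliffordTriple_Et.map idTensor.toRingHom

theorem opJt_eq_neg_cliffordVolume : opJt = -cliffordVolume opGamma := by
  simp only [cliffordVolume, opGamma, ← map_mul]
  rfl

theorem opS_eq_cliffordBivector (i : Fin 3) : opS i = cliffordBivector opGamma i := by
  rw [cliffordBivector, opGamma, opGamma, ← map_mul]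
  fin_cases i <;> rfl

theorem opT_eq_opJ_mul (i : Fin 3) : opT i = opJ * opGamma i := by
  fin_cases i <;> rfl

theorem commute_opJ_opGamma (i : Fin 3) : Commute opJ (opGamma i) :=
  LinearMap.commute_mulLeft_right _ _

theorem commute_opT_opJ (i : Fin 3) : Commute (opT i) opJ := by
  rw [opT_eq_opJ_mul]
  exact (Commute.refl opJ).mul_left (commute_opJ_opGamma i).symm

theorem commute_opT_opJt (i : Fin 3) : Commute (opT i) opJt := by
  rw [opT_eq_opJ_mul, opJt_eq_neg_cliffordVolume]
  exact ((commute_cliffordVolume commute_opJ_opGamma).mul_left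
    (isCliffordTriple_opGamma.commute_volume i).symm).neg_right

theorem opJ_ne_opJt : opJ ≠ opJt := fun h =>
  mulLeft_ne_mulRight (B := -(Et 0 * Et 1 * Et 2)ᵀ) (Eo_mul_self 3)
    (h.trans (LinearMap.ext fun Ψ => (mul_neg Ψ _).symm))

theorem neg_opJ_ne_opJt : -opJ ≠ opJt := fun h =>
  mulLeft_ne_mulRight (Eo_mul_self 3) (neg_injective h)

theorem opS_add_opT : opS + opT = chiralBivector opGamma opJ :=
  funext fun i => congrArg₂ (· + ·) (opS_eq_cliffordBivector i) (opT_eq_opJ_mul i)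

theorem opS_sub_opT : opS - opT = chiralBivector opGamma (-opJ) := by
  funext i
  rw [Pi.sub_apply, opS_eq_cliffordBivector, opT_eq_opJ_mul]
  exact (chiralBivector_neg i).symm

theorem suLSpan_eq : suLSpan = Submodule.span ℝ (Set.range (chiralBivector opGamma (-opJ))) := by
  rw [suLSpan, ← opS_sub_opT]
  exact congrArg _ (Set.ext fun g => exists_congr fun i => eq_comm)

theorem suRSpan_eq : suRSpan = Submodule.span ℝ (Set.range (chiralBivector opGamma opJ)) := by
  rw [suRSpan, ← opS_add_opT]
  exact congrArg _ (Set.ext fun g => exists_congr fun i => eq_comm)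

theorem so4Span_eq : so4Span = suLSpan ⊔ suRSpan := by
  have hgen : {g | ∃ i, g = opT i ∨ g = opS i} = Set.range opT ∪ Set.range opS := by
    ext g
    simp [exists_or, eq_comm]
  rw [so4Span, hgen, ← span_sub_sup_span_add, opS_sub_opT, opS_add_opT, suLSpan_eq, suRSpan_eq]

/-- the operators `E⁴⊗Ẽ^i` commute with both complex structures `J`, `J̃`;
together with `½ε^{ijk}I⊗Ẽ^jẼ^k` they span a Lie algebra isomorphic to
so(4) ≅ su(2) ⊕ su(2), with the two su(2) factors spanned by `S_i ∓ T_i`. -/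
theorem so4_from_two_complex_structures :
    (∀ i : Fin 3, opT i * opJ = opJ * opT i ∧ opT i * opJt = opJt * opT i) ∧
    (∀ A ∈ so4Span, ∀ B ∈ so4Span, A * B - B * A ∈ so4Span) ∧
    (∃ f : EndOT →ₗ[ℝ] Matrix (Fin 4) (Fin 4) ℝ,
      Set.InjOn f so4Span ∧ f '' so4Span = {A | Aᵀ = -A} ∧
      ∀ A ∈ so4Span, ∀ B ∈ so4Span, f (A * B - B * A) = f A * f B - f B * f A) ∧
    so4Span = suLSpan ⊔ suRSpan ∧
    (∀ A ∈ suLSpan, ∀ B ∈ suRSpan, A * B = B * A) ∧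
    (∀ A ∈ suLSpan, ∀ B ∈ suLSpan, A * B - B * A ∈ suLSpan) ∧
    (∀ A ∈ suRSpan, ∀ B ∈ suRSpan, A * B - B * A ∈ suRSpan) ∧
    (∃ fL : EndOT →ₗ[ℝ] Matrix (Fin 2) (Fin 2) ℂ,
      Set.InjOn fL suLSpan ∧ fL '' suLSpan = {A | Aᴴ = -A ∧ A.trace = 0} ∧
      ∀ A ∈ suLSpan, ∀ B ∈ suLSpan, fL (A * B - B * A) = fL A * fL B - fL B * fL A) ∧
    (∃ fR : EndOT →ₗ[ℝ] Matrix (Fin 2) (Fin 2) ℂ,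
      Set.InjOn fR suRSpan ∧ fR '' suRSpan = {A | Aᴴ = -A ∧ A.trace = 0} ∧
      ∀ A ∈ suRSpan, ∀ B ∈ suRSpan, fR (A * B - B * A) = fR A * fR B - fR B * fR A) := by
  have hγ := isCliffordTriple_opGamma
  have hL := hγ.isCrossTriple_chiralBivector (K := ℝ) ((neg_mul_neg _ _).trans opJ_mul_opJ)
    fun i => (commute_opJ_opGamma i).neg_left
  have hR := hγ.isCrossTriple_chiralBivector (K := ℝ) opJ_mul_opJ commute_opJ_opGamma
  have hLR := hγ.lie_chiralBivector_neg_chiralBivector opJ_mul_opJ commute_opJ_opGamma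
  have hL₀ := hγ.chiralBivector_ne_zero ((neg_mul_neg _ _).trans opJ_mul_opJ)
    (opJt_eq_neg_cliffordVolume ▸ neg_opJ_ne_opJt)
  have hR₀ := hγ.chiralBivector_ne_zero opJ_mul_opJ (opJt_eq_neg_cliffordVolume ▸ opJ_ne_opJt)
  have h₂ : (-2 : ℝ) ≠ 0 := by norm_num
  have h₄ : (2 * -2 : ℝ) ≠ 0 := by norm_num
  rw [so4Span_eq, suLSpan_eq, suRSpan_eq, ← coe_span_su2Triple,
    ← coe_span_quaternionLeft_sup_span_quaternionRight]
  exact ⟨fun i => ⟨commute_opT_opJ i, commute_opT_opJt i⟩,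
    fun A hA B hB => hL.lie_mem_span_sup_span hR hLR hA hB,
    hL.exists_linearMap_onto_span_sup_span h₄ hR h₄ hLR hL₀ hR₀ (isCrossTriple_quaternionLeft ℝ)
      two_ne_zero (isCrossTriple_quaternionRight ℝ) h₂ (lie_quaternionLeft_quaternionRight ℝ)
      (quaternionLeft_ne_zero ℝ) (quaternionRight_ne_zero ℝ),
    rfl,
    fun A hA B hB => sub_eq_zero.1 (lie_eq_zero_of_mem_span_range hLR hA hB),
    fun A hA B hB => hL.lie_mem_span hA hB,
    fun A hA B hB => hR.lie_mem_span hA hB,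
    hL.exists_linearMap_onto_span h₄ hL₀ isCrossTriple_su2Triple h₂ su2Triple_ne_zero,
    hR.exists_linearMap_onto_span h₄ hR₀ isCrossTriple_su2Triple h₂ su2Triple_ne_zero⟩
end
end
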